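/- arXiv:0910.1237 — 9 statements merged into one kernel-verified Lean document; each statement's English description precedes it below -/
import Mathlib

section
/- If (α,β,γ) ∈ R₁ then there exists a weighting w of H₆ such that (H₆,w) ∈ Tri(α,β,γ), and for any such weighting w one has T_min(α,β,γ) = t(H₆,w) = α+β+γ−2. -/
/-!
Lower bound: for a triple `(a, b, c) ∈ A × B × C` the indicator of being a triangle is at least
`1_{ab} + 1_{ac} + 1_{bc} - 2`, so averaging against the weights gives `t ≥ α + β + γ - 2` for every
weighted tripartite graph (`le_triDensity`). In `H₆` no triple contains two of the three missing
edges, so equality holds for every weighting (`triDensity_H6`), and any weighting of `H₆` in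
`Tri(α, β, γ)` is extremal.

Existence: writing `a, b, c` for the weights of `a₁, b₁, c₁`, the density conditions read
`(1 - a) b = 1 - γ`, `(1 - b) c = 1 - α`, `a (1 - c) = 1 - β`. Eliminating `b` and `c` leaves the
quadratic `α a² - (α + γ - β) a + (1 - β) γ = 0`, whose discriminant is `Δ(α, β, γ)`. The conditions
defining `R` force its larger root into `(1 - β, γ]`, and then `b` and `c` lie in `[0, 1]`
(`exists_params`).
-/

open Finset

/-- A tripartite graph on `n` vertices: each vertex is assigned one of
three classes, adjacency is symmetric, and edges only join distinct classes. -/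
structure TriGraph (n : ℕ) where
  cls : Fin n → Fin 3
  adj : Fin n → Fin n → Bool
  symm : ∀ u v, adj u v = adj v u
  tripart : ∀ u v, adj u v = true → cls u ≠ cls v

/-- The set of vertices in class `i`. -/
def classSet {n : ℕ} (G : TriGraph n) (i : Fin 3) : Finset (Fin n) :=
  Finset.univ.filter (fun v => G.cls v = i)

/-- A weighting of a tripartite graph: weights in `[0,1]` summing to `1`
on each class. -/
structure Weighting {n : ℕ} (G : TriGraph n) where
  w : Fin n → ℝ
  nonneg : ∀ v, 0 ≤ w v
  le_one : ∀ v, w v ≤ 1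
  sum_one : ∀ i : Fin 3, ∑ v ∈ classSet G i, w v = 1

/-- Weighted edge density between classes `i` and `j`. -/
noncomputable def edgeDensity {n : ℕ} (G : TriGraph n) (w : Fin n → ℝ) (i j : Fin 3) : ℝ :=
  ∑ x ∈ classSet G i, ∑ y ∈ classSet G j, if G.adj x y then w x * w y else 0

/-- Weighted triangle density. -/
noncomputable def triDensity {n : ℕ} (G : TriGraph n) (w : Fin n → ℝ) : ℝ :=
  ∑ a ∈ classSet G 0, ∑ b ∈ classSet G 1, ∑ c ∈ classSet G 2,
    if G.adj a b && G.adj a c && G.adj b c then w a * w b * w c else 0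

/-- `(G,W) ∈ Tri(α,β,γ)`: the three edge densities are `α` (between B and C),
`β` (between A and C) and `γ` (between A and B), where A, B, C are classes 0, 1, 2. -/
def InTri {n : ℕ} (G : TriGraph n) (W : Weighting G) (α β γ : ℝ) : Prop :=
  edgeDensity G W.w 1 2 = α ∧ edgeDensity G W.w 0 2 = β ∧ edgeDensity G W.w 0 1 = γ

/-- The minimal triangle density over all weighted tripartite graphs with
edge densities `α, β, γ`. -/
noncomputable def Tmin (α β γ : ℝ) : ℝ :=
  sInf { t : ℝ | ∃ (n : ℕ) (G : TriGraph n) (W : Weighting G),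
    InTri G W α β γ ∧ triDensity G W.w = t }

/-- `(G,W)` is extremal: it lies in `Tri(α,β,γ)` and attains `Tmin`. -/
def Extremal {n : ℕ} (G : TriGraph n) (W : Weighting G) (α β γ : ℝ) : Prop :=
  InTri G W α β γ ∧ triDensity G W.w = Tmin α β γ

/-- `(G,W)` is vertex minimal: no member of `Tri(α,β,γ)` with the same triangle
density has fewer vertices. -/
def VertexMinimal {n : ℕ} (G : TriGraph n) (W : Weighting G) (α β γ : ℝ) : Prop :=
  InTri G W α β γ ∧
    ¬ ∃ (m : ℕ) (G' : TriGraph m) (W' : Weighting G'),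
        m < n ∧ InTri G' W' α β γ ∧ triDensity G' W'.w = triDensity G W.w

/-- Membership in the cube `[0,1]³`. -/
def inCube (α β γ : ℝ) : Prop :=
  α ∈ Set.Icc (0:ℝ) 1 ∧ β ∈ Set.Icc (0:ℝ) 1 ∧ γ ∈ Set.Icc (0:ℝ) 1

/-- The region `R`. -/
def inR (α β γ : ℝ) : Prop :=
  inCube α β γ ∧ 1 < α * β + γ ∧ 1 < α * γ + β ∧ 1 < β * γ + α

/-- The discriminant `Δ(α,β,γ)`. -/
noncomputable def Delta (α β γ : ℝ) : ℝ :=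
  α^2 + β^2 + γ^2 - 2*α*β - 2*α*γ - 2*β*γ + 4*α*β*γ

/-- The region `R₁ = {(α,β,γ) ∈ R : Δ ≥ 0}`. -/
def inR1 (α β γ : ℝ) : Prop := inR α β γ ∧ 0 ≤ Delta α β γ

/-- The region `R₂ = R \ R₁`. -/
def inR2 (α β γ : ℝ) : Prop := inR α β γ ∧ Delta α β γ < 0

/-- Adjacency of a complete tripartite graph minus a given list of (non-)edges. -/
def mkAdj {n : ℕ} (cls : Fin n → Fin 3) (nonEdges : List (ℕ × ℕ)) : Fin n → Fin n → Bool :=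
  fun u v => (cls u != cls v) &&
    !(nonEdges.contains (u.val, v.val) || nonEdges.contains (v.val, u.val))

/-- `H₆`: classes A = {0,1}, B = {2,3}, C = {4,5} (vertices aᵢ, bᵢ, cᵢ in order);
the complete tripartite graph `K_{2,2,2}` minus the edges a₂b₁, b₂c₁, a₁c₂. -/
def H6 : TriGraph 6 where
  cls := ![0,0,1,1,2,2]
  adj := mkAdj ![0,0,1,1,2,2] [(1,2),(3,4),(0,5)]
  symm := by decide
  tripart := by decide

/-- `H₇`: classes A = {0,1}, B = {2,3}, C = {4,5,6};
`K_{2,2,3}` minus the edges a₂b₁, a₁c₂, a₁c₃, b₂c₁, b₂c₂. -/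
def H7 : TriGraph 7 where
  cls := ![0,0,1,1,2,2,2]
  adj := mkAdj ![0,0,1,1,2,2,2] [(1,2),(0,5),(0,6),(3,4),(3,5)]
  symm := by decide
  tripart := by decide

/-- `H₇′`: classes A = {0,1}, B = {2,3,4}, C = {5,6};
`K_{2,3,2}` minus the edges a₂b₁, a₁c₂, b₂c₁, b₂c₂, b₃c₁. -/
def H7' : TriGraph 7 where
  cls := ![0,0,1,1,1,2,2]
  adj := mkAdj ![0,0,1,1,1,2,2] [(1,2),(0,6),(3,5),(3,6),(4,5)]
  symm := by decide
  tripart := by decide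

/-- `H₉`: classes A = {0,1,2}, B = {3,4,5}, C = {6,7,8};
`K_{3,3,3}` minus the 9-cycle a₁c₂, c₂b₂, b₂c₁, c₁b₃, b₃a₂, a₂b₁, b₁a₃, a₃c₃, c₃a₁. -/
def H9 : TriGraph 9 where
  cls := ![0,0,0,1,1,1,2,2,2]
  adj := mkAdj ![0,0,0,1,1,1,2,2,2] [(0,7),(4,7),(4,6),(5,6),(1,5),(1,3),(2,3),(2,8),(0,8)]
  symm := by decide
  tripart := by decide

/-- `F₆`: classes A = {0,1}, B = {2,3}, C = {4,5};
`K_{2,2,2}` minus the edges a₁b₁, a₁c₁, b₁c₁, a₂c₂, b₂c₂. -/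
def F6 : TriGraph 6 where
  cls := ![0,0,1,1,2,2]
  adj := mkAdj ![0,0,1,1,2,2] [(0,2),(0,4),(2,4),(1,5),(3,5)]
  symm := by decide
  tripart := by decide

/-- Strong isomorphism of tripartite graphs: a graph isomorphism mapping
vertex classes onto vertex classes. -/
def StronglyIso {n m : ℕ} (G : TriGraph n) (H : TriGraph m) : Prop :=
  ∃ (e : Fin n ≃ Fin m) (σ : Fin 3 ≃ Fin 3),
    (∀ u v, H.adj (e u) (e v) = G.adj u v) ∧ ∀ v, H.cls (e v) = σ (G.cls v)

/-- A double weighting: a function `p` assigning each edge a value in `(0,1]`. -/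
structure DWeight {n : ℕ} (G : TriGraph n) where
  p : Fin n → Fin n → ℝ
  symm : ∀ u v, p u v = p v u
  pos : ∀ u v, G.adj u v = true → 0 < p u v
  le_one : ∀ u v, G.adj u v = true → p u v ≤ 1

/-- Edge density of a doubly-weighted tripartite graph. -/
noncomputable def dEdgeDensity {n : ℕ} (G : TriGraph n) (w : Fin n → ℝ)
    (p : Fin n → Fin n → ℝ) (i j : Fin 3) : ℝ :=
  ∑ x ∈ classSet G i, ∑ y ∈ classSet G j, if G.adj x y then w x * w y * p x y else 0

/-- Triangle density of a doubly-weighted tripartite graph. -/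
noncomputable def dTriDensity {n : ℕ} (G : TriGraph n) (w : Fin n → ℝ)
    (p : Fin n → Fin n → ℝ) : ℝ :=
  ∑ a ∈ classSet G 0, ∑ b ∈ classSet G 1, ∑ c ∈ classSet G 2,
    if G.adj a b && G.adj a c && G.adj b c then
      w a * w b * w c * p a b * p a c * p b c
    else 0

/-- `C_{ab}`: the vertices of class C (class 2) adjacent to both `a` and `b`. -/
def Cset {n : ℕ} (G : TriGraph n) (a b : Fin n) : Finset (Fin n) :=
  Finset.univ.filter (fun c => G.cls c = 2 ∧ G.adj a c = true ∧ G.adj b c = true)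

/-- Edge density of a simple (unweighted) tripartite graph between classes `i` and `j`. -/
noncomputable def simpleEdgeDensity {n : ℕ} (G : TriGraph n) (i j : Fin 3) : ℝ :=
  (∑ x ∈ classSet G i, ∑ y ∈ classSet G j, if G.adj x y then (1:ℝ) else 0) /
    ((classSet G i).card * (classSet G j).card)

/-- Triangle density of a simple (unweighted) tripartite graph. -/
noncomputable def simpleTriDensity {n : ℕ} (G : TriGraph n) : ℝ :=
  (∑ a ∈ classSet G 0, ∑ b ∈ classSet G 1, ∑ c ∈ classSet G 2,
    if G.adj a b && G.adj a c && G.adj b c then (1:ℝ) else 0) /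
    ((classSet G 0).card * (classSet G 1).card * (classSet G 2).card)

/-- Inclusion-exclusion lower bound for the triangle density. -/
lemma le_triDensity {n : ℕ} (G : TriGraph n) (W : Weighting G) :
    edgeDensity G W.w 1 2 + edgeDensity G W.w 0 2 + edgeDensity G W.w 0 1 - 2 ≤
      triDensity G W.w := by
  have h0 := W.sum_one 0
  have h1 := W.sum_one 1
  have h2 := W.sum_one 2
  have key : ∑ a ∈ classSet G 0, ∑ b ∈ classSet G 1, ∑ c ∈ classSet G 2,
      (W.w a * (if G.adj b c then W.w b * W.w c else 0)
        + (if G.adj a c then W.w a * W.w c else 0) * W.w b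
        + (if G.adj a b then W.w a * W.w b else 0) * W.w c
        - 2 * (W.w a * (W.w b * W.w c))) ≤ triDensity G W.w := by
    unfold triDensity
    refine sum_le_sum fun a _ => sum_le_sum fun b _ => sum_le_sum fun c _ => ?_
    have := mul_nonneg (mul_nonneg (W.nonneg a) (W.nonneg b)) (W.nonneg c)
    cases G.adj a b <;> cases G.adj a c <;> cases G.adj b c <;> simp <;> nlinarith
  refine le_trans (le_of_eq ?_) key
  have e1 : ∑ a ∈ classSet G 0, ∑ b ∈ classSet G 1, ∑ c ∈ classSet G 2,
      W.w a * (if G.adj b c then W.w b * W.w c else 0) = edgeDensity G W.w 1 2 := by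
    simp_rw [← mul_sum]
    rw [← sum_mul, h0, one_mul]; rfl
  have e2 : ∑ a ∈ classSet G 0, ∑ b ∈ classSet G 1, ∑ c ∈ classSet G 2,
      (if G.adj a c then W.w a * W.w c else 0) * W.w b = edgeDensity G W.w 0 2 := by
    simp_rw [← sum_mul, ← mul_sum, h1, mul_one]; rfl
  have e3 : ∑ a ∈ classSet G 0, ∑ b ∈ classSet G 1, ∑ c ∈ classSet G 2,
      (if G.adj a b then W.w a * W.w b else 0) * W.w c = edgeDensity G W.w 0 1 := by
    simp_rw [← mul_sum, h2, mul_one]; rfl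
  have e4 : ∑ a ∈ classSet G 0, ∑ b ∈ classSet G 1, ∑ c ∈ classSet G 2,
      2 * (W.w a * (W.w b * W.w c)) = 2 := by
    simp_rw [← mul_sum, h2, mul_one, h1, mul_one, h0, mul_one]
  simp_rw [sum_sub_distrib, sum_add_distrib]
  rw [e1, e2, e3, e4]

lemma classSet_H6_zero : classSet H6 0 = {0, 1} := by decide

lemma classSet_H6_one : classSet H6 1 = {2, 3} := by decide

lemma classSet_H6_two : classSet H6 2 = {4, 5} := by decide

lemma edgeDensity_H6_BC (w : Fin 6 → ℝ) :
    edgeDensity H6 w 1 2 = w 2 * w 4 + w 2 * w 5 + w 3 * w 5 := by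
  simp [edgeDensity, classSet_H6_one, classSet_H6_two, show H6.adj 2 4 = true by decide,
    show H6.adj 2 5 = true by decide, show H6.adj 3 4 = false by decide,
    show H6.adj 3 5 = true by decide]

lemma edgeDensity_H6_AC (w : Fin 6 → ℝ) :
    edgeDensity H6 w 0 2 = w 0 * w 4 + w 1 * w 4 + w 1 * w 5 := by
  simp [edgeDensity, classSet_H6_zero, classSet_H6_two, show H6.adj 0 4 = true by decide,
    show H6.adj 0 5 = false by decide, show H6.adj 1 4 = true by decide,
    show H6.adj 1 5 = true by decide, add_assoc]

lemma edgeDensity_H6_AB (w : Fin 6 → ℝ) :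
    edgeDensity H6 w 0 1 = w 0 * w 2 + w 0 * w 3 + w 1 * w 3 := by
  simp [edgeDensity, classSet_H6_zero, classSet_H6_one, show H6.adj 0 2 = true by decide,
    show H6.adj 0 3 = true by decide, show H6.adj 1 2 = false by decide,
    show H6.adj 1 3 = true by decide]

lemma triDensity_H6_eq (w : Fin 6 → ℝ) :
    triDensity H6 w = w 0 * w 2 * w 4 + w 1 * w 3 * w 5 := by
  simp [triDensity, classSet_H6_zero, classSet_H6_one, classSet_H6_two,
    show H6.adj 2 4 = true by decide,
    show H6.adj 2 5 = true by decide, show H6.adj 3 4 = false by decide,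
    show H6.adj 3 5 = true by decide, show H6.adj 0 4 = true by decide,
    show H6.adj 0 5 = false by decide, show H6.adj 1 4 = true by decide,
    show H6.adj 1 5 = true by decide, show H6.adj 0 2 = true by decide,
    show H6.adj 0 3 = true by decide, show H6.adj 1 2 = false by decide,
    show H6.adj 1 3 = true by decide]

/-- Equality in `le_triDensity` for every weighting of `H₆`. -/
lemma triDensity_H6 (W : Weighting H6) :
    triDensity H6 W.w =
      edgeDensity H6 W.w 1 2 + edgeDensity H6 W.w 0 2 + edgeDensity H6 W.w 0 1 - 2 := by
  have h0 := W.sum_one 0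
  have h1 := W.sum_one 1
  have h2 := W.sum_one 2
  rw [classSet_H6_zero, sum_pair (by decide)] at h0
  rw [classSet_H6_one, sum_pair (by decide)] at h1
  rw [classSet_H6_two, sum_pair (by decide)] at h2
  rw [triDensity_H6_eq, edgeDensity_H6_BC, edgeDensity_H6_AC, edgeDensity_H6_AB,
    show W.w 1 = 1 - W.w 0 by linarith, show W.w 3 = 1 - W.w 2 by linarith,
    show W.w 5 = 1 - W.w 4 by linarith]
  ring

/-- Solvability of the density equations of `H₆` on `R₁`, in terms of the weights `a, b, c`
of the first vertex of each class. -/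
lemma exists_params {α β γ : ℝ} (h : inR1 α β γ) :
    ∃ a b c : ℝ, a ∈ Set.Icc (0 : ℝ) 1 ∧ b ∈ Set.Icc (0 : ℝ) 1 ∧ c ∈ Set.Icc (0 : ℝ) 1 ∧
      (1 - a) * b = 1 - γ ∧ (1 - b) * c = 1 - α ∧ a * (1 - c) = 1 - β := by
  obtain ⟨⟨⟨⟨hα0, hα1⟩, ⟨hβ0, hβ1⟩, ⟨hγ0, hγ1⟩⟩, hC, hB, hA⟩, hΔ⟩ := h
  have hα : 0 < α := by nlinarith
  obtain ⟨s, hs0, hs⟩ : ∃ s : ℝ, 0 ≤ s ∧ s * s = Delta α β γ :=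
    ⟨√(Delta α β γ), Real.sqrt_nonneg _, Real.mul_self_sqrt hΔ⟩
  unfold Delta at hs
  obtain ⟨a, ha⟩ : ∃ a : ℝ, 2 * α * a = α + γ - β + s :=
    ⟨(α + γ - β + s) / (2 * α), by field_simp⟩
  have hquad : α * a ^ 2 - (α + γ - β) * a + (1 - β) * γ = 0 := by
    have : 4 * α * (α * a ^ 2 - (α + γ - β) * a + (1 - β) * γ) = 0 := by
      linear_combination hs + (2 * α * a - (α + γ - β) + s) * ha
    exact (mul_eq_zero.mp this).resolve_left (by positivity)
  -- Both bounds on `a` compare the vertex of the parabola with `1 - β` and `γ`.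
  have ha_gt : 1 - β < a := by
    have : 0 < 2 * α * (a - (1 - β)) := by
      nlinarith [mul_nonneg (sub_nonneg.2 hα1) (sub_nonneg.2 hβ1)]
    have := (pos_iff_pos_of_mul_pos this).1 (by positivity)
    linarith
  have ha_le : a ≤ γ := by
    -- The quadratic takes the value `γ (1 - γ) (1 - α) ≥ 0` at `γ`, right of its vertex.
    have h1 : 0 < 2 * α * γ - (α + γ - β) := by
      nlinarith [mul_nonneg (sub_nonneg.2 hα1) (sub_nonneg.2 hγ1)]
    have h2 : s * s ≤ (2 * α * γ - (α + γ - β)) * (2 * α * γ - (α + γ - β)) := by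
      have := mul_nonneg hα.le
        (mul_nonneg hγ0 (mul_nonneg (sub_nonneg.2 hγ1) (sub_nonneg.2 hα1)))
      linear_combination hs + 4 * this
    have h3 : s ≤ 2 * α * γ - (α + γ - β) := abs_le_of_sq_le_sq' (by rwa [sq, sq]) h1.le |>.2
    exact le_of_mul_le_mul_left (by linarith : 2 * α * a ≤ 2 * α * γ) (by positivity)
  have ha0 : 0 < a := by linarith
  obtain ⟨c, hc⟩ : ∃ c : ℝ, a * (1 - c) = 1 - β := ⟨1 - (1 - β) / a, by field_simp; ring⟩
  have hc0 : 0 < c := pos_of_mul_pos_right (by linarith : 0 < a * c) ha0.le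
  have hc1 : c ≤ 1 :=
    sub_nonneg.1 (nonneg_of_mul_nonneg_right (by linarith : 0 ≤ a * (1 - c)) ha0)
  obtain ⟨b, hb⟩ : ∃ b : ℝ, (1 - b) * c = 1 - α := ⟨1 - (1 - α) / c, by field_simp; ring⟩
  have hb1 : b ≤ 1 :=
    sub_nonneg.1 (nonneg_of_mul_nonneg_left (by linarith : 0 ≤ (1 - b) * c) hc0)
  have hab : (1 - a) * b = 1 - γ := by
    have : a * c * ((1 - a) * b - (1 - γ)) = 0 := by
      linear_combination (-(a * (1 - a))) * hb + (-(1 - a) + (1 - γ)) * hc - hquad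
    have := (mul_eq_zero.mp this).resolve_left (by positivity)
    linarith
  have hb0 : 0 ≤ b := by
    rcases (ha_le.trans hγ1).lt_or_eq with h1 | h1
    · exact nonneg_of_mul_nonneg_right (by linarith) (sub_pos.2 h1)
    · -- When `a = 1` the equation for `γ` says nothing about `b`, but then `γ = 1` and `c = β`.
      have : γ = 1 := le_antisymm hγ1 (h1 ▸ ha_le)
      subst h1 this
      exact nonneg_of_mul_nonneg_left (by linarith : 0 ≤ b * c) hc0
  exact ⟨a, b, c, ⟨ha0.le, ha_le.trans hγ1⟩, ⟨hb0, hb1⟩, ⟨hc0.le, hc1⟩, hab, hb, hc⟩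

/-- The weighting of `H₆` giving `a₁, b₁, c₁` the weights `a, b, c`. -/
def weightingH6 (a b c : ℝ) (ha : a ∈ Set.Icc (0 : ℝ) 1) (hb : b ∈ Set.Icc (0 : ℝ) 1)
    (hc : c ∈ Set.Icc (0 : ℝ) 1) : Weighting H6 where
  w := ![a, 1 - a, b, 1 - b, c, 1 - c]
  nonneg v := by
    obtain ⟨ha0, ha1⟩ := ha
    obtain ⟨hb0, hb1⟩ := hb
    obtain ⟨hc0, hc1⟩ := hc
    fin_cases v <;> simp <;> assumption
  le_one v := by
    obtain ⟨ha0, ha1⟩ := ha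
    obtain ⟨hb0, hb1⟩ := hb
    obtain ⟨hc0, hc1⟩ := hc
    fin_cases v <;> simp <;> assumption
  sum_one i := by
    fin_cases i
    · change ∑ v ∈ classSet H6 0, _ = _
      rw [classSet_H6_zero, sum_pair (by decide)]; simp
    · change ∑ v ∈ classSet H6 1, _ = _
      rw [classSet_H6_one, sum_pair (by decide)]; simp
    · change ∑ v ∈ classSet H6 2, _ = _
      rw [classSet_H6_two, sum_pair (by decide)]; simp

/-- If (α,β,γ) ∈ R₁ then H₆ admits a weighting in Tri(α,β,γ), and for
any such weighting, T_min(α,β,γ) = t(H₆,w) = α+β+γ−2. -/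
theorem stmt2 (α β γ : ℝ) (h : inR1 α β γ) :
    (∃ W : Weighting H6, InTri H6 W α β γ) ∧
      ∀ W : Weighting H6, InTri H6 W α β γ →
        Tmin α β γ = triDensity H6 W.w ∧ triDensity H6 W.w = α + β + γ - 2 := by
  refine ⟨?_, fun W hW => ?_⟩
  · obtain ⟨a, b, c, ha, hb, hc, h1, h2, h3⟩ := exists_params h
    refine ⟨weightingH6 a b c ha hb hc, ?_, ?_, ?_⟩
    · rw [edgeDensity_H6_BC]
      change b * c + b * (1 - c) + (1 - b) * (1 - c) = α
      linarith
    · rw [edgeDensity_H6_AC]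
      change a * c + (1 - a) * c + (1 - a) * (1 - c) = β
      linarith
    · rw [edgeDensity_H6_AB]
      change a * b + a * (1 - b) + (1 - a) * (1 - b) = γ
      linarith
  · have ht : triDensity H6 W.w = α + β + γ - 2 := by
      rw [triDensity_H6, hW.1, hW.2.1, hW.2.2]
    refine ⟨IsLeast.csInf_eq ⟨⟨6, H6, W, hW, rfl⟩, ?_⟩, ht⟩
    rintro t ⟨n, G, W', ⟨hα, hβ, hγ⟩, rfl⟩
    have := le_triDensity G W'
    rw [hα, hβ, hγ] at this
    rwa [ht]
end

section
/- For rational α, β, γ ∈ [0,1]: if (H,w) ∈ Tri(α,β,γ), then for every ε > 0 there exists a simple tripartite graph G with edge densities α, β, γ whose triangle density is at most t(H,w) + ε. -/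
/-!
The graph is obtained by blowing up `H` and correcting the edge counts. Fix a large `N` such that
`N²α`, `N²β`, `N²γ` are integers, and give all three classes of `G` exactly `N` vertices.

* Rounding (`exists_blowup_map`): the `N` new vertices of a class are distributed over the old
  vertices of that class so that `v` receives `N w(v) + O(n)` of them, and at least `N w(v) - 1`.
* The blow-up along these maps has at least `N²α - 2n²N` edges between the last two classes
  (`blowup_edges`), similarly for the other pairs, and its triangle density is at most
  `t(H,w) + O(1/N)` (`blowup_triangles`).
* Each of the three edge sets is replaced by a subset or a superset with exactly the prescribed
  number of edges (`exists_adjust`). Only the added edges can create triangles; there are at most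
  `2n²N` of them per pair of classes, and each lies in at most `N` triangles (`triangles_adjust`).
  So the triangle density grows by `O(1/N)`.

Taking `N` large makes the total error at most `ε`.
-/

open Finset

/-! ### Tripartite graphs with classes of equal size -/

/-- The adjacency on `Fin 3 × Fin N` (class, position) given by three bipartite edge sets. -/
def gluedAdj {N : ℕ} (P Q R : Finset (Fin N × Fin N)) (u v : Fin 3 × Fin N) : Bool :=
  (u.1 = 0 ∧ v.1 = 1 ∧ (u.2, v.2) ∈ P) ∨ (u.1 = 1 ∧ v.1 = 0 ∧ (v.2, u.2) ∈ P) ∨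
  (u.1 = 0 ∧ v.1 = 2 ∧ (u.2, v.2) ∈ Q) ∨ (u.1 = 2 ∧ v.1 = 0 ∧ (v.2, u.2) ∈ Q) ∨
  (u.1 = 1 ∧ v.1 = 2 ∧ (u.2, v.2) ∈ R) ∨ (u.1 = 2 ∧ v.1 = 1 ∧ (v.2, u.2) ∈ R)

lemma gluedAdj_comm {N : ℕ} (P Q R : Finset (Fin N × Fin N)) (u v : Fin 3 × Fin N) :
    gluedAdj P Q R u v = gluedAdj P Q R v u := by
  have key : ∀ u v, gluedAdj P Q R u v = true → gluedAdj P Q R v u = true := by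
    intro u v
    simp only [gluedAdj, decide_eq_true_eq]
    rintro (⟨a, b, c⟩ | ⟨a, b, c⟩ | ⟨a, b, c⟩ | ⟨a, b, c⟩ | ⟨a, b, c⟩ | ⟨a, b, c⟩) <;>
      simp [a, b, c]
  exact Bool.eq_iff_iff.2 ⟨key u v, key v u⟩

lemma gluedAdj_ne {N : ℕ} (P Q R : Finset (Fin N × Fin N)) (u v : Fin 3 × Fin N)
    (h : gluedAdj P Q R u v = true) : u.1 ≠ v.1 := by
  simp only [gluedAdj, decide_eq_true_eq] at h
  rcases h with h | h | h | h | h | h <;> simp [h.1, h.2.1]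

/-- The tripartite graph with three classes of size `N` whose edge sets between the classes
`0,1`, between `0,2` and between `1,2` are `P`, `Q` and `R`. -/
def gluedGraph {N : ℕ} (P Q R : Finset (Fin N × Fin N)) : TriGraph (3 * N) where
  cls u := (finProdFinEquiv.symm u).1
  adj u v := gluedAdj P Q R (finProdFinEquiv.symm u) (finProdFinEquiv.symm v)
  symm _ _ := gluedAdj_comm P Q R _ _
  tripart _ _ h := gluedAdj_ne P Q R _ _ h

/-- The triples of positions spanning a triangle for the bipartite edge sets `P`, `Q`, `R`. -/
def triangles {N : ℕ} (P Q R : Finset (Fin N × Fin N)) : Finset (Fin N × Fin N × Fin N) :=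
  Finset.univ.filter fun t => (t.1, t.2.1) ∈ P ∧ (t.1, t.2.2) ∈ Q ∧ (t.2.1, t.2.2) ∈ R

section glued
variable {N : ℕ} (P Q R : Finset (Fin N × Fin N))

/-- The embedding of the positions as the class `i` of the glued graph. -/
def classEmb {N : ℕ} (i : Fin 3) : Fin N ↪ Fin (3 * N) :=
  (Function.Embedding.sectR i (Fin N)).trans finProdFinEquiv.toEmbedding

lemma classSet_glued (i : Fin 3) :
    classSet (gluedGraph P Q R) i = Finset.univ.map (classEmb i) := by
  ext u
  obtain ⟨⟨j, x⟩, rfl⟩ := finProdFinEquiv.surjective u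
  have hcls : (gluedGraph P Q R).cls (finProdFinEquiv (j, x)) = j :=
    congrArg Prod.fst (finProdFinEquiv.symm_apply_apply (j, x))
  rw [classSet, Finset.mem_filter, Finset.mem_map, hcls]
  constructor
  · rintro ⟨_, rfl⟩
    exact ⟨x, Finset.mem_univ _, rfl⟩
  · rintro ⟨y, _, h⟩
    exact ⟨Finset.mem_univ _, (congrArg Prod.fst (finProdFinEquiv.injective h)).symm⟩

lemma adj_glued (i j : Fin 3) (x y : Fin N) :
    (gluedGraph P Q R).adj (classEmb i x) (classEmb j y) = gluedAdj P Q R (i, x) (j, y) :=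
  congrArg₂ (gluedAdj P Q R) (finProdFinEquiv.symm_apply_apply (i, x))
    (finProdFinEquiv.symm_apply_apply (j, y))

lemma sum_mem_eq_card (E : Finset (Fin N × Fin N)) :
    (∑ x : Fin N, ∑ y : Fin N, if (x, y) ∈ E then (1 : ℝ) else 0) = E.card := by
  rw [← Fintype.sum_prod_type' (fun x y : Fin N => if (x, y) ∈ E then (1 : ℝ) else 0)]
  simp

lemma simpleEdgeDensity_glued :
    simpleEdgeDensity (gluedGraph P Q R) 0 1 = P.card / (N * N : ℝ) ∧
    simpleEdgeDensity (gluedGraph P Q R) 0 2 = Q.card / (N * N : ℝ) ∧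
    simpleEdgeDensity (gluedGraph P Q R) 1 2 = R.card / (N * N : ℝ) := by
  simp only [simpleEdgeDensity, classSet_glued, Finset.sum_map, adj_glued,
    Finset.card_map, Finset.card_univ, Fintype.card_fin, ← sum_mem_eq_card]
  simp [gluedAdj]

lemma simpleTriDensity_glued :
    simpleTriDensity (gluedGraph P Q R) = (triangles P Q R).card / (N * N * N : ℝ) := by
  have h : ((triangles P Q R).card : ℝ) = ∑ a : Fin N, ∑ b : Fin N, ∑ c : Fin N,
      if (a, b) ∈ P ∧ (a, c) ∈ Q ∧ (b, c) ∈ R then (1 : ℝ) else 0 := by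
    rw [triangles, Finset.card_filter]
    push_cast
    rw [Fintype.sum_prod_type]
    simp_rw [Fintype.sum_prod_type]
  simp only [simpleTriDensity, classSet_glued, Finset.sum_map, adj_glued,
    Finset.card_map, Finset.card_univ, Fintype.card_fin, h]
  simp [gluedAdj, and_assoc]

end glued

/-! ### Correcting edge counts -/

/-- A finite set can be shrunk or enlarged to any admissible size `k`, adding no more elements
than the deficit. -/
lemma exists_adjust {X : Type*} [Fintype X] [DecidableEq X] (E : Finset X) (k : ℕ)
    (hk : k ≤ Fintype.card X) :
    ∃ E' : Finset X, E'.card = k ∧ (E' \ E).card ≤ k - E.card := by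
  rcases le_total k E.card with h | h
  · obtain ⟨E', hE', hc⟩ := Finset.exists_subset_card_eq h
    exact ⟨E', hc, by simp [Finset.sdiff_eq_empty_iff_subset.2 hE']⟩
  · obtain ⟨E', hE', hc⟩ := Finset.exists_superset_card_eq h hk
    exact ⟨E', hc, by rw [Finset.card_sdiff_of_subset hE', hc]⟩

/-- Every new triangle uses a new edge, and each edge lies in at most `N` triangles. -/
lemma triangles_adjust {N : ℕ} (P Q R P' Q' R' : Finset (Fin N × Fin N)) :
    (triangles P' Q' R').card ≤ (triangles P Q R).card
      + ((P' \ P).card + (Q' \ Q).card + (R' \ R).card) * N := by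
  have hsub : triangles P' Q' R' ⊆ triangles P Q R ∪
      (((P' \ P) ×ˢ (Finset.univ : Finset (Fin N))).image (fun p => (p.1.1, p.1.2, p.2)) ∪
       ((Q' \ Q) ×ˢ (Finset.univ : Finset (Fin N))).image (fun p => (p.1.1, p.2, p.1.2)) ∪
       ((R' \ R) ×ˢ (Finset.univ : Finset (Fin N))).image (fun p => (p.2, p.1.1, p.1.2))) := by
    rintro ⟨a, b, c⟩ h
    simp only [triangles, Finset.mem_filter, Finset.mem_univ, true_and, Finset.mem_union,
      Finset.mem_image, Finset.mem_product, and_true, Finset.mem_sdiff, Prod.exists,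
      Prod.mk.injEq] at h ⊢
    by_cases hP : (a, b) ∈ P
    · by_cases hQ : (a, c) ∈ Q
      · by_cases hR : (b, c) ∈ R
        · exact Or.inl ⟨hP, hQ, hR⟩
        · exact Or.inr (Or.inr ⟨b, c, a, ⟨h.2.2, hR⟩, rfl, rfl, rfl⟩)
      · exact Or.inr (Or.inl (Or.inr ⟨a, c, b, ⟨h.2.1, hQ⟩, rfl, rfl, rfl⟩))
    · exact Or.inr (Or.inl (Or.inl ⟨a, b, c, ⟨h.1, hP⟩, rfl, rfl, rfl⟩))
  have hbd : ∀ (E : Finset (Fin N × Fin N)) (φ : (Fin N × Fin N) × Fin N → Fin N × Fin N × Fin N),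
      ((E ×ˢ (Finset.univ : Finset (Fin N))).image φ).card ≤ E.card * N := fun E φ =>
    Finset.card_image_le.trans (by simp [Finset.card_product])
  refine (Finset.card_le_card hsub).trans ((Finset.card_union_le _ _).trans ?_)
  refine Nat.add_le_add_left ((Finset.card_union_le _ _).trans ?_) _
  rw [add_mul, add_mul]
  exact Nat.add_le_add ((Finset.card_union_le _ _).trans (Nat.add_le_add (hbd _ _) (hbd _ _)))
    (hbd _ _)

/-! ### Rounding the weights and blowing up -/

/-- The number of positions mapped to `v`, i.e. the size of the blow-up of `v`. -/
def mult {n N : ℕ} (f : Fin N → Fin n) (v : Fin n) : ℕ :=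
  (Finset.univ.filter fun x => f x = v).card

/-- The weights on a class are rounded down after scaling by `N`, and the missing vertices (at
most `n` of them) are all given to a single vertex. -/
lemma exists_blowup_map {n : ℕ} (S : Finset (Fin n)) (w : Fin n → ℝ) (hw : ∀ v, 0 ≤ w v)
    (hS : ∑ v ∈ S, w v = 1) (N : ℕ) :
    ∃ f : Fin N → Fin n, (∀ x, f x ∈ S) ∧
      ∀ v ∈ S, N * w v - 1 ≤ mult f v ∧ (mult f v : ℝ) ≤ N * w v + n := by
  classical
  have hne : S.Nonempty := by
    rw [Finset.nonempty_iff_ne_empty]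
    rintro rfl
    simp at hS
  obtain ⟨v₀, hv₀⟩ := hne
  have hsum : ∑ v ∈ S, N * w v = N := by rw [← Finset.mul_sum, hS, mul_one]
  set s : ℕ := ∑ v ∈ S, ⌊N * w v⌋₊ with hs
  have hsle : s ≤ N := by
    have : (s : ℝ) ≤ N := by
      refine le_trans ?_ hsum.le
      rw [hs]
      push_cast
      exact Finset.sum_le_sum fun v _ => Nat.floor_le (mul_nonneg (Nat.cast_nonneg _) (hw v))
    exact_mod_cast this
  have hsge : (N : ℝ) - n ≤ s := by
    have h1 : ∑ v ∈ S, (N * w v - 1) ≤ (s : ℝ) := by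
      rw [hs]
      push_cast
      exact Finset.sum_le_sum fun v _ => (Nat.sub_one_lt_floor _).le
    have h2 : (S.card : ℝ) ≤ n := by exact_mod_cast (Finset.card_le_univ S).trans (by simp)
    rw [Finset.sum_sub_distrib, hsum] at h1
    simp at h1
    linarith
  let k : Fin n → ℕ := fun v => ⌊N * w v⌋₊ + if v = v₀ then N - s else 0
  have hk : ∑ v ∈ S, k v = N := by
    simp only [k, Finset.sum_add_distrib, Finset.sum_ite_eq', hv₀, if_true]
    omega
  have hcard : Fintype.card (Fin N) = Fintype.card (Σ v : S, Fin (k v)) := by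
    rw [Fintype.card_sigma]
    simp only [Fintype.card_fin]
    rw [Finset.sum_coe_sort S k, hk]
  let e := Fintype.equivOfCardEq hcard
  have hmult : ∀ v ∈ S, mult (fun x => ((e x).1 : Fin n)) v = k v := by
    intro v hv
    have : (Finset.univ.filter fun x => ((e x).1 : Fin n) = v) = Finset.univ.map
        ((Function.Embedding.sigmaMk (β := fun v : S => Fin (k v)) ⟨v, hv⟩).trans
          e.symm.toEmbedding) := by
      ext x
      obtain ⟨⟨⟨u, hu⟩, y⟩, rfl⟩ := e.symm.surjective x
      rw [Finset.mem_filter, Finset.mem_map, Equiv.apply_symm_apply]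
      constructor
      · rintro ⟨_, rfl⟩
        exact ⟨y, Finset.mem_univ _, rfl⟩
      · rintro ⟨z, _, hz⟩
        exact ⟨Finset.mem_univ _, (congrArg (fun p : Σ v : S, Fin (k v) => (p.1 : Fin n))
          (e.symm.injective hz)).symm⟩
    rw [mult, this]
    simp
  refine ⟨fun x => (e x).1, fun x => (e x).1.2, fun v hv => ?_⟩
  rw [hmult v hv]
  have hfl := Nat.floor_le (mul_nonneg (Nat.cast_nonneg N) (hw v))
  have hfl' := Nat.sub_one_lt_floor (N * w v)
  simp only [k]
  push_cast [hsle]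
  split_ifs
  · have : (s : ℝ) ≤ N := by exact_mod_cast hsle
    constructor <;> linarith
  · have : (0 : ℝ) ≤ n := Nat.cast_nonneg n
    constructor <;> linarith

lemma sum_comp_mult {n N : ℕ} (S : Finset (Fin n)) (f : Fin N → Fin n) (hf : ∀ x, f x ∈ S)
    (F : Fin n → ℝ) : ∑ x, F (f x) = ∑ v ∈ S, mult f v * F v := by
  rw [← Finset.sum_fiberwise_of_maps_to (s := Finset.univ) (t := S) (g := f) fun x _ => hf x]
  refine Finset.sum_congr rfl fun v _ => ?_
  rw [Finset.sum_congr rfl (g := fun _ => F v) fun x hx => by rw [(Finset.mem_filter.1 hx).2]]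
  simp [mult]

lemma mult_le {n N : ℕ} (f : Fin N → Fin n) (v : Fin n) : mult f v ≤ N :=
  (Finset.card_le_univ _).trans (by simp)

/-- The pairs of positions adjacent in the blow-up of `H`. -/
def blowupEdges {n N : ℕ} (H : TriGraph n) (f g : Fin N → Fin n) : Finset (Fin N × Fin N) :=
  Finset.univ.filter fun p => H.adj (f p.1) (g p.2) = true

/-- The double sum has at most `n²` terms, and each loses at most `2N` by rounding. -/
lemma blowup_edges {n N : ℕ} (H : TriGraph n) (W : Weighting H) (i j : Fin 3)
    (f g : Fin N → Fin n) (hf : ∀ x, f x ∈ classSet H i) (hg : ∀ x, g x ∈ classSet H j)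
    (hfw : ∀ v ∈ classSet H i, N * W.w v - 1 ≤ mult f v)
    (hgw : ∀ v ∈ classSet H j, N * W.w v - 1 ≤ mult g v) :
    edgeDensity H W.w i j * (N * N) - 2 * n ^ 2 * N ≤ ((blowupEdges H f g).card : ℝ) := by
  have hcount : ((blowupEdges H f g).card : ℝ) = ∑ x ∈ classSet H i, ∑ y ∈ classSet H j,
      if H.adj x y then (mult f x * mult g y : ℝ) else 0 := by
    rw [← sum_mem_eq_card]
    simp only [blowupEdges, Finset.mem_filter, Finset.mem_univ, true_and]
    rw [sum_comp_mult _ f hf fun u => ∑ y, if H.adj u (g y) = true then (1 : ℝ) else 0]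
    refine Finset.sum_congr rfl fun x _ => ?_
    rw [sum_comp_mult _ g hg fun v => if H.adj x v = true then (1 : ℝ) else 0, Finset.mul_sum]
    refine Finset.sum_congr rfl fun y _ => ?_
    split_ifs <;> simp
  have hN : (0 : ℝ) ≤ N := Nat.cast_nonneg N
  have hc : ∀ S : Finset (Fin n), (S.card : ℝ) ≤ n := fun S => by
    exact_mod_cast (Finset.card_le_univ S).trans (by simp)
  have hterm : ∑ x ∈ classSet H i, ∑ y ∈ classSet H j,
      ((if H.adj x y then W.w x * W.w y else 0) * (N * N) - 2 * N)
      ≤ ((blowupEdges H f g).card : ℝ) := by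
    rw [hcount]
    refine Finset.sum_le_sum fun x hx => Finset.sum_le_sum fun y hy => ?_
    split_ifs
    · have h1 := hfw x hx
      have h2 := hgw y hy
      have h3 : (mult f x : ℝ) ≤ N := by exact_mod_cast mult_le f x
      have h4 : (0 : ℝ) ≤ mult f x := Nat.cast_nonneg _
      have h5 : N * W.w y ≤ N := mul_le_of_le_one_right hN (W.le_one y)
      have h6 : 0 ≤ N * W.w y := mul_nonneg hN (W.nonneg y)
      have h7 := mul_le_mul_of_nonneg_left h2 h4
      have h8 := mul_le_mul_of_nonneg_right h1 h6
      nlinarith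
    · linarith
  refine le_trans ?_ hterm
  simp only [Finset.sum_sub_distrib, ← Finset.sum_mul, Finset.sum_const, nsmul_eq_mul]
  have hmul := mul_le_mul (hc (classSet H i)) (hc (classSet H j)) (Nat.cast_nonneg _)
    (Nat.cast_nonneg n)
  have := mul_le_mul_of_nonneg_right hmul (by positivity : (0 : ℝ) ≤ 2 * N)
  unfold edgeDensity
  linarith

/-- The triple sum has at most `n³` terms, and each gains at most `3nN²` by rounding. -/
lemma blowup_triangles {n N : ℕ} (H : TriGraph n) (W : Weighting H)
    (f g h : Fin N → Fin n) (hf : ∀ x, f x ∈ classSet H 0) (hg : ∀ x, g x ∈ classSet H 1)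
    (hh : ∀ x, h x ∈ classSet H 2)
    (hfw : ∀ v ∈ classSet H 0, (mult f v : ℝ) ≤ N * W.w v + n)
    (hgw : ∀ v ∈ classSet H 1, (mult g v : ℝ) ≤ N * W.w v + n)
    (hhw : ∀ v ∈ classSet H 2, (mult h v : ℝ) ≤ N * W.w v + n) :
    ((triangles (blowupEdges H f g) (blowupEdges H f h) (blowupEdges H g h)).card : ℝ)
      ≤ triDensity H W.w * (N * N * N) + 3 * n ^ 4 * (N * N) := by
  have hcount : ((triangles (blowupEdges H f g) (blowupEdges H f h) (blowupEdges H g h)).card : ℝ)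
      = ∑ a ∈ classSet H 0, ∑ b ∈ classSet H 1, ∑ c ∈ classSet H 2,
        if H.adj a b && H.adj a c && H.adj b c then
          (mult f a * mult g b * mult h c : ℝ) else 0 := by
    rw [triangles, Finset.card_filter]
    push_cast
    rw [Fintype.sum_prod_type]
    simp_rw [Fintype.sum_prod_type]
    simp only [blowupEdges, Finset.mem_filter, Finset.mem_univ, true_and]
    rw [sum_comp_mult _ f hf fun u => ∑ y, ∑ z,
      if H.adj u (g y) = true ∧ H.adj u (h z) = true ∧ H.adj (g y) (h z) = true
        then (1 : ℝ) else 0]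
    refine Finset.sum_congr rfl fun a _ => ?_
    rw [sum_comp_mult _ g hg fun v => ∑ z,
      if H.adj a v = true ∧ H.adj a (h z) = true ∧ H.adj v (h z) = true
        then (1 : ℝ) else 0, Finset.mul_sum]
    refine Finset.sum_congr rfl fun b _ => ?_
    rw [sum_comp_mult _ h hh fun u =>
      if H.adj a b = true ∧ H.adj a u = true ∧ H.adj b u = true
        then (1 : ℝ) else 0, Finset.mul_sum, Finset.mul_sum]
    refine Finset.sum_congr rfl fun c _ => ?_
    simp only [Bool.and_eq_true, and_assoc]
    split_ifs <;> simp [mul_assoc]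
  have hN : (0 : ℝ) ≤ N := Nat.cast_nonneg N
  have hn : (0 : ℝ) ≤ n := Nat.cast_nonneg n
  have hc : ∀ S : Finset (Fin n), (S.card : ℝ) ≤ n := fun S => by
    exact_mod_cast (Finset.card_le_univ S).trans (by simp)
  have hterm : ((triangles (blowupEdges H f g) (blowupEdges H f h) (blowupEdges H g h)).card : ℝ)
      ≤ ∑ a ∈ classSet H 0, ∑ b ∈ classSet H 1, ∑ c ∈ classSet H 2,
        ((if H.adj a b && H.adj a c && H.adj b c then W.w a * W.w b * W.w c else 0) * (N * N * N)
          + 3 * n * (N * N)) := by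
    rw [hcount]
    refine Finset.sum_le_sum fun a ha => Finset.sum_le_sum fun b hb =>
      Finset.sum_le_sum fun c hc => ?_
    split_ifs
    · have ka := hfw a ha
      have kb := hgw b hb
      have kc := hhw c hc
      have lb : (mult g b : ℝ) ≤ N := by exact_mod_cast mult_le g b
      have lc : (mult h c : ℝ) ≤ N := by exact_mod_cast mult_le h c
      have wa : N * W.w a ≤ N := mul_le_of_le_one_right hN (W.le_one a)
      have wb : N * W.w b ≤ N := mul_le_of_le_one_right hN (W.le_one b)
      have wa' : 0 ≤ N * W.w a := mul_nonneg hN (W.nonneg a)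
      have wb' : 0 ≤ N * W.w b := mul_nonneg hN (W.nonneg b)
      -- replace the three multiplicities by `N * w` one at a time
      have s1 : (mult f a : ℝ) * (mult g b * mult h c)
          ≤ N * W.w a * (mult g b * mult h c) + n * (N * N) := by
        have q : (mult g b * mult h c : ℝ) ≤ N * N := by gcongr
        have := mul_le_mul_of_nonneg_right ka (by positivity : (0 : ℝ) ≤ mult g b * mult h c)
        have := mul_le_mul_of_nonneg_left q hn
        linarith
      have s2 : N * W.w a * (mult g b * mult h c)
          ≤ N * W.w a * (N * W.w b * mult h c) + n * (N * N) := by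
        have q : (N * W.w a) * mult h c ≤ N * N := by gcongr
        have := mul_le_mul_of_nonneg_right kb
          (by positivity : (0 : ℝ) ≤ (N * W.w a) * mult h c)
        have := mul_le_mul_of_nonneg_left q hn
        linarith
      have s3 : N * W.w a * (N * W.w b * mult h c)
          ≤ N * W.w a * (N * W.w b * (N * W.w c)) + n * (N * N) := by
        have q : (N * W.w a) * (N * W.w b) ≤ N * N := by gcongr
        have := mul_le_mul_of_nonneg_right kc
          (by positivity : (0 : ℝ) ≤ (N * W.w a) * (N * W.w b))
        have := mul_le_mul_of_nonneg_left q hn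
        linarith
      linarith
    · positivity
  refine hterm.trans ?_
  simp only [Finset.sum_add_distrib, ← Finset.sum_mul, Finset.sum_const, nsmul_eq_mul]
  have hmul : ((classSet H 0).card * ((classSet H 1).card * (classSet H 2).card) : ℝ)
      ≤ n * (n * n) := by
    gcongr <;> exact_mod_cast hc _
  have := mul_le_mul_of_nonneg_right hmul (by positivity : (0 : ℝ) ≤ 3 * n * (N * N))
  unfold triDensity
  linarith

/-! ### Choice of the class size -/

lemma exists_edge_count (q : ℚ) (h : (q : ℝ) ∈ Set.Icc (0 : ℝ) 1) (N : ℕ) (hN : q.den ∣ N) :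
    ∃ k : ℕ, (k : ℝ) = q * (N * N) ∧ k ≤ N * N := by
  obtain ⟨c, rfl⟩ := hN
  have hnum : 0 ≤ q.num := Rat.num_nonneg.2 (by exact_mod_cast h.1)
  have hden : (q.den : ℝ) ≠ 0 := by exact_mod_cast q.den_nz
  have key : ((q.num.toNat * c * (q.den * c) : ℕ) : ℝ)
      = q * ((q.den * c : ℕ) * (q.den * c : ℕ)) := by
    have h1 : ((q.num.toNat : ℕ) : ℝ) = q.num := by
      exact_mod_cast congrArg (fun z : ℤ => (z : ℝ)) (Int.toNat_of_nonneg hnum)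
    have h2 : (q.num : ℝ) = q * q.den := by exact_mod_cast (Rat.mul_den_eq_num q).symm
    push_cast
    rw [h1, h2]
    ring
  refine ⟨_, key, ?_⟩
  have : ((q.num.toNat * c * (q.den * c) : ℕ) : ℝ) ≤ ((q.den * c : ℕ) * (q.den * c : ℕ)) := by
    rw [key]
    exact mul_le_of_le_one_left (by positivity) h.2
  exact_mod_cast this

/-- For rational α, β, γ ∈ [0,1], if (H,w) ∈ Tri(α,β,γ) then for every
ε > 0 there is a simple tripartite graph with edge densities α, β, γ and triangle
density at most t(H,w) + ε. -/
theorem stmt5 (qα qβ qγ : ℚ)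
    (hα : (qα : ℝ) ∈ Set.Icc (0:ℝ) 1) (hβ : (qβ : ℝ) ∈ Set.Icc (0:ℝ) 1)
    (hγ : (qγ : ℝ) ∈ Set.Icc (0:ℝ) 1)
    {n : ℕ} (H : TriGraph n) (W : Weighting H)
    (hH : InTri H W (qα : ℝ) (qβ : ℝ) (qγ : ℝ))
    (ε : ℝ) (hε : 0 < ε) :
    ∃ (m : ℕ) (G : TriGraph m), (∀ i : Fin 3, (classSet G i).Nonempty) ∧
      simpleEdgeDensity G 1 2 = (qα : ℝ) ∧
      simpleEdgeDensity G 0 2 = (qβ : ℝ) ∧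
      simpleEdgeDensity G 0 1 = (qγ : ℝ) ∧
      simpleTriDensity G ≤ triDensity H W.w + ε := by
  obtain ⟨M, hM⟩ := exists_nat_ge ((3 * n ^ 4 + 6 * n ^ 2 : ℝ) / ε)
  have hdpos : 0 < qα.den * qβ.den * qγ.den :=
    Nat.mul_pos (Nat.mul_pos qα.den_pos qβ.den_pos) qγ.den_pos
  -- a common multiple of the denominators, large enough for the error term
  obtain ⟨N, hNdef⟩ : ∃ N, N = qα.den * qβ.den * qγ.den * (M + 1) := ⟨_, rfl⟩
  have hNpos : 0 < N := hNdef ▸ Nat.mul_pos hdpos M.succ_pos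
  have hMN : M ≤ N := by
    rw [hNdef]
    nlinarith
  have hNε : (3 * n ^ 4 + 6 * n ^ 2 : ℝ) ≤ ε * N := by
    rw [div_le_iff₀ hε] at hM
    have : (M : ℝ) ≤ N := by exact_mod_cast hMN
    nlinarith
  obtain ⟨kα, hkα, hkα'⟩ := exists_edge_count qα hα N
    (hNdef ▸ Dvd.intro (qβ.den * qγ.den * (M + 1)) (by ring))
  obtain ⟨kβ, hkβ, hkβ'⟩ := exists_edge_count qβ hβ N
    (hNdef ▸ Dvd.intro (qα.den * qγ.den * (M + 1)) (by ring))
  obtain ⟨kγ, hkγ, hkγ'⟩ := exists_edge_count qγ hγ N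
    (hNdef ▸ Dvd.intro (qα.den * qβ.den * (M + 1)) (by ring))
  obtain ⟨f, hf, hfw⟩ := exists_blowup_map (classSet H 0) W.w W.nonneg (W.sum_one 0) N
  obtain ⟨g, hg, hgw⟩ := exists_blowup_map (classSet H 1) W.w W.nonneg (W.sum_one 1) N
  obtain ⟨h, hh, hhw⟩ := exists_blowup_map (classSet H 2) W.w W.nonneg (W.sum_one 2) N
  have eα := blowup_edges H W 1 2 g h hg hh (fun v hv => (hgw v hv).1) fun v hv => (hhw v hv).1
  have eβ := blowup_edges H W 0 2 f h hf hh (fun v hv => (hfw v hv).1) fun v hv => (hhw v hv).1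
  have eγ := blowup_edges H W 0 1 f g hf hg (fun v hv => (hfw v hv).1) fun v hv => (hgw v hv).1
  have et := blowup_triangles H W f g h hf hg hh (fun v hv => (hfw v hv).2)
    (fun v hv => (hgw v hv).2) fun v hv => (hhw v hv).2
  rw [hH.1, ← hkα] at eα
  rw [hH.2.1, ← hkβ] at eβ
  rw [hH.2.2, ← hkγ] at eγ
  obtain ⟨R, hR, hRd⟩ := exists_adjust (blowupEdges H g h) kα (by simpa using hkα')
  obtain ⟨Q, hQ, hQd⟩ := exists_adjust (blowupEdges H f h) kβ (by simpa using hkβ')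
  obtain ⟨P, hP, hPd⟩ := exists_adjust (blowupEdges H f g) kγ (by simpa using hkγ')
  have hN0 : (0 : ℝ) < N := by exact_mod_cast hNpos
  have deficit : ∀ {d k e : ℕ}, d ≤ k - e → (k : ℝ) - 2 * n ^ 2 * N ≤ e →
      (d : ℝ) ≤ 2 * n ^ 2 * N := by
    intro d k e hd hke
    rcases le_total k e with hle | hle
    · have : d = 0 := by omega
      subst this
      simp only [Nat.cast_zero]
      positivity
    · have : (d : ℝ) + e ≤ k := by exact_mod_cast (by omega : d + e ≤ k)
      linarith
  have dα := deficit hRd eα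
  have dβ := deficit hQd eβ
  have dγ := deficit hPd eγ
  have htri := (Nat.cast_le (α := ℝ)).2 (triangles_adjust (blowupEdges H f g)
    (blowupEdges H f h) (blowupEdges H g h) P Q R)
  obtain ⟨h01, h02, h12⟩ := simpleEdgeDensity_glued P Q R
  refine ⟨3 * N, gluedGraph P Q R, fun i => ?_, ?_, ?_, ?_, ?_⟩
  · rw [classSet_glued, Finset.map_nonempty]
    exact ⟨⟨0, hNpos⟩, Finset.mem_univ _⟩
  · rw [h12, hR, hkα]
    field_simp
  · rw [h02, hQ, hkβ]
    field_simp
  · rw [h01, hP, hkγ]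
    field_simp
  · rw [simpleTriDensity_glued, div_le_iff₀ (by positivity)]
    push_cast at htri
    have h1 := mul_le_mul_of_nonneg_right (add_le_add (add_le_add dγ dβ) dα) hN0.le
    have h2 := mul_le_mul_of_nonneg_right hNε (by positivity : (0 : ℝ) ≤ N * N)
    linarith
end

section
/- If w is a weighting of H₆ such that (H₆,w) ∈ Tri(α,β,γ), then t(H₆,w) = α+β+γ−2 = T_min(α,β,γ). -/
/-!
For every triple `(a, b, c)` the number of edges it spans, minus two, is at most the indicator that
it is a triangle, with equality exactly when the triple misses at most one edge. Averaging over the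
product of the three class weightings turns the left side into `α + β + γ - 2`
(`sum_edgeExcess`), so every member of `Tri(α, β, γ)` has triangle density at least
`α + β + γ - 2`. The three non-edges of `H₆` are pairwise disjoint with no two in a common triple
(`H6_missing_le_one`), so `H₆` attains this bound under any weighting.
-/

open Finset

/-- The average over triples of the number of spanned edges minus two is `α + β + γ - 2`. -/
lemma sum_edgeExcess {n : ℕ} (G : TriGraph n) (W : Weighting G) {α β γ : ℝ}
    (h : InTri G W α β γ) :
    ∑ a ∈ classSet G 0, ∑ b ∈ classSet G 1, ∑ c ∈ classSet G 2,
      W.w a * W.w b * W.w c * ((if G.adj a b then 1 else 0) + (if G.adj a c then 1 else 0)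
        + (if G.adj b c then 1 else 0) - 2) = α + β + γ - 2 := by
  obtain ⟨rfl, rfl, rfl⟩ := h
  have hA := W.sum_one 0
  have hB := W.sum_one 1
  have hC := W.sum_one 2
  have h1 : ∑ a ∈ classSet G 0, ∑ b ∈ classSet G 1, ∑ c ∈ classSet G 2,
      W.w a * W.w b * W.w c * (if G.adj a b then 1 else 0) = edgeDensity G W.w 0 1 := by
    refine sum_congr rfl fun a _ => sum_congr rfl fun b _ => ?_
    rw [← sum_mul, ← mul_sum, hC]
    split_ifs <;> ring
  have h2 : ∑ a ∈ classSet G 0, ∑ b ∈ classSet G 1, ∑ c ∈ classSet G 2,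
      W.w a * W.w b * W.w c * (if G.adj a c then 1 else 0) = edgeDensity G W.w 0 2 := by
    refine sum_congr rfl fun a _ => ?_
    rw [sum_comm]
    refine sum_congr rfl fun c _ => ?_
    rw [← sum_mul, ← sum_mul, ← mul_sum, hB]
    split_ifs <;> ring
  have h3 : ∑ a ∈ classSet G 0, ∑ b ∈ classSet G 1, ∑ c ∈ classSet G 2,
      W.w a * W.w b * W.w c * (if G.adj b c then 1 else 0) = edgeDensity G W.w 1 2 := by
    rw [sum_comm]
    refine sum_congr rfl fun b _ => ?_
    rw [sum_comm]
    refine sum_congr rfl fun c _ => ?_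
    rw [← sum_mul, ← sum_mul, ← sum_mul, hA]
    split_ifs <;> ring
  have h4 : ∑ a ∈ classSet G 0, ∑ b ∈ classSet G 1, ∑ c ∈ classSet G 2,
      W.w a * W.w b * W.w c * 2 = 2 := by
    simp only [← sum_mul, ← mul_sum, hA, hB, hC]
    norm_num
  simp only [mul_sub, mul_add, sum_sub_distrib, sum_add_distrib]
  rw [h1, h2, h3, h4]
  ring

lemma add_sub_two_le_triDensity {n : ℕ} (G : TriGraph n) (W : Weighting G) {α β γ : ℝ}
    (h : InTri G W α β γ) : α + β + γ - 2 ≤ triDensity G W.w := by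
  rw [← sum_edgeExcess G W h]
  refine sum_le_sum fun a _ => sum_le_sum fun b _ => sum_le_sum fun c _ => ?_
  have hw : 0 ≤ W.w a * W.w b * W.w c :=
    mul_nonneg (mul_nonneg (W.nonneg a) (W.nonneg b)) (W.nonneg c)
  rcases hab : G.adj a b <;> rcases hac : G.adj a c <;> rcases hbc : G.adj b c <;>
    simp <;> nlinarith

/-- Among any two of the three pairs in a triple of `H₆`, at least one is an edge. -/
lemma H6_missing_le_one : ∀ a b c : Fin 6, H6.cls a = 0 → H6.cls b = 1 → H6.cls c = 2 →
    (H6.adj a b || H6.adj a c) && (H6.adj a b || H6.adj b c) && (H6.adj a c || H6.adj b c) := by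
  decide

/-- If w is a weighting of H₆ with (H₆,w) ∈ Tri(α,β,γ) then
t(H₆,w) = α+β+γ−2 = T_min(α,β,γ). -/
theorem stmt7 (α β γ : ℝ) (W : Weighting H6) (h : InTri H6 W α β γ) :
    triDensity H6 W.w = α + β + γ - 2 ∧ α + β + γ - 2 = Tmin α β γ := by
  have key : triDensity H6 W.w = α + β + γ - 2 := by
    rw [← sum_edgeExcess H6 W h]
    refine sum_congr rfl fun a ha => sum_congr rfl fun b hb => sum_congr rfl fun c hc => ?_
    simp only [classSet, mem_filter, mem_univ, true_and] at ha hb hc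
    have hex := H6_missing_le_one a b c ha hb hc
    rcases hab : H6.adj a b <;> rcases hac : H6.adj a c <;> rcases hbc : H6.adj b c <;>
      simp [hab, hac, hbc] at hex ⊢ <;> norm_num
  refine ⟨key, Eq.symm (IsLeast.csInf_eq ⟨⟨6, H6, W, h, key⟩, ?_⟩)⟩
  rintro t ⟨n, G, W', h', rfl⟩
  exact add_sub_two_le_triDensity G W' h'
end

section
/- For (α,β,γ) ∈ R, there exists a weighting w of H₆ such that (H₆,w) ∈ Tri(α,β,γ) if and only if (α,β,γ) ∈ R₁. -/
/-!
The six vertex weights of `H₆` are determined by `x = w a₁`, `y = w b₁`, `z = w c₁`, and the edge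
densities record the three missing edges: `1 - γ = (1 - x) y`, `1 - α = (1 - y) z`,
`1 - β = x (1 - z)`. Eliminating `x` and `z` leaves the quadratic
`β y² - (α + β - γ) y + α (1 - γ) = 0`, whose discriminant is exactly `Δ(α, β, γ)`
(`quadratic_of_system`). A weighting therefore forces `Δ ≥ 0`.

Conversely (`exists_solution`), let `y` be the larger root of this quadratic. In `R` the vertex of
the parabola lies strictly between `1 - γ` and `α`, and the quadratic takes the nonnegative value
`α (1 - α) (1 - β)` at `α`, so `1 - γ < y ≤ α`. Hence `x = 1 - (1 - γ) / y` and
`z = (1 - α) / (1 - y)` lie in `[0, 1]`, provided `α < 1`; the case `α = 1` is solved directly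
with `z = 0`.
-/

open Finset

/-- The equations satisfied by the weights `x, y, z` of `a₁, b₁, c₁`, one for each missing edge
of `H₆`. -/
def H6System (α β γ x y z : ℝ) : Prop :=
  (1 - y) * z = 1 - α ∧ x * (1 - z) = 1 - β ∧ (1 - x) * y = 1 - γ

lemma sum_classSet_H6 (f : Fin 6 → ℝ) :
    ∑ v ∈ classSet H6 0, f v = f 0 + f 1 ∧ ∑ v ∈ classSet H6 1, f v = f 2 + f 3 ∧
      ∑ v ∈ classSet H6 2, f v = f 4 + f 5 := by
  have h0 : classSet H6 0 = {0, 1} := by decide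
  have h1 : classSet H6 1 = {2, 3} := by decide
  have h2 : classSet H6 2 = {4, 5} := by decide
  rw [h0, h1, h2]
  refine ⟨?_, ?_, ?_⟩ <;> exact Finset.sum_pair (by decide)

lemma edgeDensity_H6 (w : Fin 6 → ℝ) :
    edgeDensity H6 w 1 2 = w 2 * w 4 + w 2 * w 5 + w 3 * w 5 ∧
    edgeDensity H6 w 0 2 = w 0 * w 4 + w 1 * w 4 + w 1 * w 5 ∧
    edgeDensity H6 w 0 1 = w 0 * w 2 + w 0 * w 3 + w 1 * w 3 := by
  have t1 : H6.adj 2 4 = true := by decide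
  have t2 : H6.adj 2 5 = true := by decide
  have t3 : H6.adj 3 5 = true := by decide
  have t4 : H6.adj 0 4 = true := by decide
  have t5 : H6.adj 1 4 = true := by decide
  have t6 : H6.adj 1 5 = true := by decide
  have t7 : H6.adj 0 2 = true := by decide
  have t8 : H6.adj 0 3 = true := by decide
  have t9 : H6.adj 1 3 = true := by decide
  have f1 : H6.adj 3 4 = false := by decide
  have f2 : H6.adj 0 5 = false := by decide
  have f3 : H6.adj 1 2 = false := by decide
  simp only [edgeDensity, (sum_classSet_H6 _).1, (sum_classSet_H6 _).2.1,
    (sum_classSet_H6 _).2.2, t1, t2, t3, t4, t5, t6, t7, t8, t9, f1, f2, f3]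
  refine ⟨?_, ?_, ?_⟩ <;> simp <;> ring

/-- A weighting of `H₆` with prescribed densities is a solution of the system in `[0, 1]³`. -/
lemma exists_weighting_iff (α β γ : ℝ) :
    (∃ W : Weighting H6, InTri H6 W α β γ) ↔
      ∃ x y z : ℝ, x ∈ Set.Icc (0 : ℝ) 1 ∧ y ∈ Set.Icc (0 : ℝ) 1 ∧ z ∈ Set.Icc (0 : ℝ) 1 ∧
        H6System α β γ x y z := by
  constructor
  · rintro ⟨W, hα, hβ, hγ⟩
    rw [(edgeDensity_H6 _).1] at hα
    rw [(edgeDensity_H6 _).2.1] at hβ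
    rw [(edgeDensity_H6 _).2.2] at hγ
    have s0 := W.sum_one 0
    have s1 := W.sum_one 1
    have s2 := W.sum_one 2
    rw [(sum_classSet_H6 _).1] at s0
    rw [(sum_classSet_H6 _).2.1] at s1
    rw [(sum_classSet_H6 _).2.2] at s2
    have e1 : W.w 1 = 1 - W.w 0 := by linarith
    have e3 : W.w 3 = 1 - W.w 2 := by linarith
    have e5 : W.w 5 = 1 - W.w 4 := by linarith
    rw [e3, e5] at hα
    rw [e1, e5] at hβ
    rw [e1, e3] at hγ
    refine ⟨W.w 0, W.w 2, W.w 4, ⟨W.nonneg _, W.le_one _⟩, ⟨W.nonneg _, W.le_one _⟩,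
      ⟨W.nonneg _, W.le_one _⟩, ?_, ?_, ?_⟩
    · linear_combination -hα
    · linear_combination -hβ
    · linear_combination -hγ
  · rintro ⟨x, y, z, ⟨hx0, hx1⟩, ⟨hy0, hy1⟩, ⟨hz0, hz1⟩, hα, hβ, hγ⟩
    refine ⟨⟨![x, 1 - x, y, 1 - y, z, 1 - z], ?_, ?_, ?_⟩, ?_, ?_, ?_⟩
    · intro v
      fin_cases v <;> simp <;> linarith
    · intro v
      fin_cases v <;> simp <;> linarith
    · intro i
      fin_cases i
      · exact (sum_classSet_H6 _).1.trans (by simp)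
      · exact (sum_classSet_H6 _).2.1.trans (by simp)
      · exact (sum_classSet_H6 _).2.2.trans (by simp)
    · refine (edgeDensity_H6 _).1.trans ?_
      simp
      linear_combination -hα
    · refine (edgeDensity_H6 _).2.1.trans ?_
      simp
      linear_combination -hβ
    · refine (edgeDensity_H6 _).2.2.trans ?_
      simp
      linear_combination -hγ

/-- Elimination of `x` and `z`: the missing edge densities give `x y = y - (1 - γ)` and
`(1 - y) (1 - z) = α - y`, and the product of these is `(1 - β) y (1 - y)`. -/
lemma quadratic_of_system {α β γ x y z : ℝ} (h : H6System α β γ x y z) :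
    β * y ^ 2 - (α + β - γ) * y + α * (1 - γ) = 0 := by
  obtain ⟨hα, hβ, hγ⟩ := h
  have h1 : x * y = y - (1 - γ) := by linear_combination -hγ
  have h2 : (1 - y) * (1 - z) = α - y := by linear_combination -hα
  have h3 : (x * y) * ((1 - y) * (1 - z)) = (1 - β) * (y * (1 - y)) := by
    linear_combination (y * (1 - y)) * hβ
  rw [h1, h2] at h3
  linear_combination -h3

lemma exists_solution {α β γ : ℝ} (h : inR α β γ) (hΔ : 0 ≤ Delta α β γ) :
    ∃ x y z : ℝ, x ∈ Set.Icc (0 : ℝ) 1 ∧ y ∈ Set.Icc (0 : ℝ) 1 ∧ z ∈ Set.Icc (0 : ℝ) 1 ∧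
      H6System α β γ x y z := by
  obtain ⟨⟨⟨hα0, hα1⟩, ⟨hβ0, hβ1⟩, ⟨hγ0, hγ1⟩⟩, hR1, hR2, hR3⟩ := h
  have hβ : 0 < β := by nlinarith
  rcases eq_or_lt_of_le hα1 with rfl | hα
  · refine ⟨1 - β, (1 - γ) / β, 0, ⟨by linarith, by linarith⟩,
      ⟨div_nonneg (by linarith) hβ.le, (div_le_one hβ).2 (by linarith)⟩, ⟨le_rfl, zero_le_one⟩,
      by ring, by ring, ?_⟩
    field_simp
    ring
  · obtain ⟨s, hs⟩ : ∃ s, s = √(Delta α β γ) := ⟨_, rfl⟩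
    have hs0 : 0 ≤ s := hs ▸ Real.sqrt_nonneg _
    have hs2 : s ^ 2 = Delta α β γ := hs ▸ Real.sq_sqrt hΔ
    obtain ⟨y, hy⟩ : ∃ y, y = (α + β - γ + s) / (2 * β) := ⟨_, rfl⟩
    have hys : 2 * β * y = α + β - γ + s := by rw [hy]; field_simp
    have hquad : β * y ^ 2 - (α + β - γ) * y + α * (1 - γ) = 0 := by
      have : s = 2 * β * y - (α + β - γ) := by linarith
      rw [this, Delta] at hs2
      have h4 : 4 * β * (β * y ^ 2 - (α + β - γ) * y + α * (1 - γ)) = 0 := by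
        linear_combination hs2
      exact (mul_eq_zero.1 h4).resolve_left (by positivity)
    have hbg : 0 ≤ (1 - β) * (1 - γ) := mul_nonneg (by linarith) (by linarith)
    have hab : 0 ≤ (1 - α) * (1 - β) := mul_nonneg (by linarith) (by linarith)
    -- The vertex of the parabola is to the right of `1 - γ`, and `y` is to the right of the vertex.
    have hlow : 1 - γ < y := by
      have : 2 * β * (1 - γ) < 2 * β * y := by rw [hys]; linarith
      exact lt_of_mul_lt_mul_left this (by positivity)
    -- `s` is at most twice `β` times the distance from the vertex to `α`, since the quadratic
    -- equals `α (1 - α) (1 - β) ≥ 0` at `α`.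
    have hhigh : y ≤ α := by
      have hd : 0 ≤ 2 * α * β - (α + β - γ) := by linarith
      have hsd : s ≤ 2 * α * β - (α + β - γ) := by
        refine abs_le_of_sq_le_sq' ?_ hd |>.2
        rw [hs2, Delta]
        have : 0 ≤ 4 * β * (α * ((1 - α) * (1 - β))) := by positivity
        linarith
      have : 2 * β * y ≤ 2 * β * α := by rw [hys]; linarith
      exact le_of_mul_le_mul_left this (by positivity)
    have hy0 : 0 < y := by linarith
    have hy1 : 0 < 1 - y := by linarith
    have hxn : 0 ≤ (1 - γ) / y := div_nonneg (by linarith) hy0.le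
    have hxl : (1 - γ) / y ≤ 1 := (div_le_one hy0).2 hlow.le
    refine ⟨1 - (1 - γ) / y, y, (1 - α) / (1 - y), ⟨by linarith, by linarith⟩,
      ⟨hy0.le, by linarith⟩, ⟨div_nonneg (by linarith) hy1.le, (div_le_one hy1).2 (by linarith)⟩,
      ?_, ?_, ?_⟩
    · field_simp
    · field_simp
      linear_combination -hquad
    · field_simp
      ring

/-- For (α,β,γ) ∈ R, H₆ admits a weighting in Tri(α,β,γ) iff
(α,β,γ) ∈ R₁. -/
theorem stmt9 (α β γ : ℝ) (h : inR α β γ) :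
    (∃ W : Weighting H6, InTri H6 W α β γ) ↔ inR1 α β γ := by
  rw [exists_weighting_iff]
  refine ⟨fun ⟨x, y, z, _, _, _, hs⟩ => ⟨h, ?_⟩, fun h1 => exists_solution h1.1 h1.2⟩
  -- The discriminant of a quadratic with a root `y` is a square.
  have hΔ : Delta α β γ = (2 * β * y - (α + β - γ)) ^ 2 := by
    rw [Delta]
    linear_combination -(4 * β) * quadratic_of_system hs
  rw [hΔ]
  positivity
end

section
/- For every doubly-weighted tripartite graph (G,w,p) there exists a weighted tripartite graph (G′,w′) whose three edge densities and triangle density equal those of (G,w,p). -/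
/-!
Each edge weight `p(uv)` is realised by randomly deleting the edge, with the randomness encoded in
the vertex weights. Orient the pairs of classes cyclically, `A → B → C → A`, and split every vertex
`v` into copies `(v, S)`, one for each set `S` of vertices, where `(v, S)` carries the weight `w(v)`
times the probability `subsetProb` that a random set containing each `u` independently with
probability `p(vu)` equals `S`. For `v` in a class and `u` in the next one, `(v, S)` is joined to
`(u, T)` exactly when `uv` is an edge and `u ∈ S`.

By `sum_subsetProb` the copies of `v` have total weight `w(v)`, and by `sum_subsetProb_mem` those
with `u ∈ S` have total weight `w(v) p(vu)`, which gives the edge densities. In a triangle `abc` the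
presence of the three edges is decided by the three copies separately (`ab` by the copy of `a`,
`bc` by that of `b`, `ca` by that of `c`), because the orientation is cyclic. So the three events
are independent and the triangle density is right too.
-/

open Finset

/-! ### Random subsets -/

/-- The probability that a random subset of `Fin n`, containing each `u` independently with
probability `f u`, equals `S`. -/
noncomputable def subsetProb {n : ℕ} (f : Fin n → ℝ) (S : Finset (Fin n)) : ℝ :=
  (∏ u ∈ S, f u) * ∏ u ∈ univ \ S, (1 - f u)

lemma sum_subsetProb {n : ℕ} (f : Fin n → ℝ) : ∑ S, subsetProb f S = 1 := by
  have h := Finset.prod_add f (fun u => 1 - f u) univ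
  simp only [add_sub_cancel, prod_const_one, powerset_univ] at h
  exact h.symm

lemma sum_subsetProb_mem {n : ℕ} (f : Fin n → ℝ) (u : Fin n) :
    ∑ S, (if u ∈ S then subsetProb f S else 0) = f u := by
  -- Replacing the factor `1 - f u` by `0` removes exactly the sets that avoid `u`.
  have h := Finset.prod_add f (fun x => if x = u then 0 else 1 - f x) univ
  have h1 : ∏ x, (f x + if x = u then 0 else 1 - f x) = f u := by
    rw [Finset.prod_eq_single u]
    · simp
    · intro b _ hb
      simp [hb]
    · simp
  rw [h1, powerset_univ] at h
  rw [h]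
  refine Finset.sum_congr rfl fun S _ => ?_
  split_ifs with hu
  · unfold subsetProb
    congr 1
    refine Finset.prod_congr rfl fun x hx => ?_
    have : x ≠ u := by
      rintro rfl
      simp [hu] at hx
    simp [this]
  · rw [Finset.prod_eq_zero (i := u) (s := univ \ S) (by simp [hu]) (by simp), mul_zero]

lemma subsetProb_nonneg {n : ℕ} {f : Fin n → ℝ} (h0 : ∀ u, 0 ≤ f u) (h1 : ∀ u, f u ≤ 1)
    (S : Finset (Fin n)) : 0 ≤ subsetProb f S :=
  mul_nonneg (Finset.prod_nonneg fun u _ => h0 u)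
    (Finset.prod_nonneg fun u _ => sub_nonneg.2 (h1 u))

lemma subsetProb_le_one {n : ℕ} {f : Fin n → ℝ} (h0 : ∀ u, 0 ≤ f u) (h1 : ∀ u, f u ≤ 1)
    (S : Finset (Fin n)) : subsetProb f S ≤ 1 := by
  rw [← sum_subsetProb f]
  exact Finset.single_le_sum (fun T _ => subsetProb_nonneg h0 h1 T) (mem_univ S)

/-! ### The split graph -/

/-- An enumeration of the split vertices `(v, S)`. -/
noncomputable def splitEquiv (n : ℕ) :
    Fin (Fintype.card (Fin n × Finset (Fin n))) ≃ Fin n × Finset (Fin n) :=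
  (Fintype.equivFin _).symm

/-- The split graph on the copies `(v, S)`: an edge of `G` from `v` to a vertex `u` of the
cyclically next class survives between `(v, S)` and `(u, T)` when `u ∈ S`. -/
noncomputable def splitGraph {n : ℕ} (G : TriGraph n) :
    TriGraph (Fintype.card (Fin n × Finset (Fin n))) where
  cls k := G.cls (splitEquiv n k).1
  adj k l :=
    G.adj (splitEquiv n k).1 (splitEquiv n l).1 &&
      ((decide (G.cls (splitEquiv n l).1 = G.cls (splitEquiv n k).1 + 1) &&
          decide ((splitEquiv n l).1 ∈ (splitEquiv n k).2)) ||
        (decide (G.cls (splitEquiv n k).1 = G.cls (splitEquiv n l).1 + 1) &&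
          decide ((splitEquiv n k).1 ∈ (splitEquiv n l).2)))
  symm k l := by rw [G.symm, Bool.or_comm]
  tripart k l h := G.tripart _ _ (by
    rw [Bool.and_eq_true] at h
    exact h.1)

/-- The probability of keeping the edge from `v` to `u`; it is `0` off the edges of `G`, where `p`
is unconstrained. -/
noncomputable def keepProb {n : ℕ} (G : TriGraph n) (p : Fin n → Fin n → ℝ) (v u : Fin n) : ℝ :=
  if G.adj v u then p v u else 0

/-- The weight of the copies `(v, S)`. -/
noncomputable def splitWeight {n : ℕ} (G : TriGraph n) (w : Fin n → ℝ) (p : Fin n → Fin n → ℝ)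
    (k : Fin (Fintype.card (Fin n × Finset (Fin n)))) : ℝ :=
  w (splitEquiv n k).1 * subsetProb (keepProb G p (splitEquiv n k).1) (splitEquiv n k).2

lemma sum_classSet_splitGraph {n : ℕ} (G : TriGraph n) (i : Fin 3)
    (f : Fin (Fintype.card (Fin n × Finset (Fin n))) → ℝ) :
    ∑ k ∈ classSet (splitGraph G) i, f k =
      ∑ v ∈ classSet G i, ∑ S, f ((splitEquiv n).symm (v, S)) := by
  unfold classSet
  rw [Finset.sum_filter, Finset.sum_filter, ← Equiv.sum_comp (splitEquiv n).symm,
    Fintype.sum_prod_type]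
  refine Finset.sum_congr rfl fun v _ => ?_
  by_cases h : G.cls v = i <;> simp [splitGraph, h]

/-! ### Densities of the split graph -/

/-- Edge density of the split graph from a class to the cyclically next one. -/
lemma edgeDensity_splitGraph {n : ℕ} (G : TriGraph n) (w : Fin n → ℝ) (p : Fin n → Fin n → ℝ)
    (i j : Fin 3) (hij : j = i + 1) :
    edgeDensity (splitGraph G) (splitWeight G w p) i j = dEdgeDensity G w p i j := by
  unfold edgeDensity dEdgeDensity
  simp only [sum_classSet_splitGraph]
  refine Finset.sum_congr rfl fun v hv => ?_
  rw [Finset.sum_comm]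
  refine Finset.sum_congr rfl fun u hu => ?_
  have hv' : G.cls v = i := by simpa [classSet] using hv
  have hu' : G.cls u = j := by simpa [classSet] using hu
  have hne : ¬ i = j + 1 := by
    rw [hij]
    exact (by decide : ∀ i : Fin 3, ¬ i = i + 1 + 1) i
  by_cases h : G.adj v u
  · have key : ∀ S T : Finset (Fin n),
        (if (splitGraph G).adj ((splitEquiv n).symm (v, S)) ((splitEquiv n).symm (u, T)) then
          splitWeight G w p ((splitEquiv n).symm (v, S)) *
            splitWeight G w p ((splitEquiv n).symm (u, T)) else 0) =
        w v * w u * (if u ∈ S then subsetProb (keepProb G p v) S else 0) *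
          subsetProb (keepProb G p u) T := by
      intro S T
      by_cases hS : u ∈ S
      · simp [splitGraph, splitWeight, h, hv', hu', hS, ← hij]
        ring
      · simp [splitGraph, h, hv', hu', hS, hne]
    simp only [key, ← Finset.mul_sum, ← Finset.sum_mul, sum_subsetProb, sum_subsetProb_mem]
    simp [keepProb, h]
  · simp [splitGraph, h]

lemma edgeDensity_comm {n : ℕ} (G : TriGraph n) (w : Fin n → ℝ) (i j : Fin 3) :
    edgeDensity G w i j = edgeDensity G w j i := by
  unfold edgeDensity
  rw [Finset.sum_comm]
  simp only [G.symm, mul_comm]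

lemma dEdgeDensity_comm {n : ℕ} (G : TriGraph n) (w : Fin n → ℝ) (P : DWeight G) (i j : Fin 3) :
    dEdgeDensity G w P.p i j = dEdgeDensity G w P.p j i := by
  unfold dEdgeDensity
  rw [Finset.sum_comm]
  refine Finset.sum_congr rfl fun x _ => Finset.sum_congr rfl fun y _ => ?_
  rw [G.symm y x, P.symm y x, mul_comm (w y)]

lemma triDensity_splitGraph {n : ℕ} (G : TriGraph n) (w : Fin n → ℝ) (P : DWeight G) :
    triDensity (splitGraph G) (splitWeight G w P.p) = dTriDensity G w P.p := by
  unfold triDensity dTriDensity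
  simp only [sum_classSet_splitGraph]
  refine Finset.sum_congr rfl fun a ha => ?_
  rw [Finset.sum_comm]
  refine Finset.sum_congr rfl fun b hb => ?_
  simp only [Finset.sum_comm (t := classSet G 2)]
  refine Finset.sum_congr rfl fun c hc => ?_
  have ha' : G.cls a = 0 := by simpa [classSet] using ha
  have hb' : G.cls b = 1 := by simpa [classSet] using hb
  have hc' : G.cls c = 2 := by simpa [classSet] using hc
  by_cases h : (G.adj a b && G.adj a c && G.adj b c) = true
  · rw [if_pos h]
    simp only [Bool.and_eq_true] at h
    obtain ⟨⟨hab, hac⟩, hbc⟩ := h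
    have key : ∀ S T U : Finset (Fin n),
        (if (splitGraph G).adj ((splitEquiv n).symm (a, S)) ((splitEquiv n).symm (b, T)) &&
            (splitGraph G).adj ((splitEquiv n).symm (a, S)) ((splitEquiv n).symm (c, U)) &&
            (splitGraph G).adj ((splitEquiv n).symm (b, T)) ((splitEquiv n).symm (c, U)) then
          splitWeight G w P.p ((splitEquiv n).symm (a, S)) *
            splitWeight G w P.p ((splitEquiv n).symm (b, T)) *
            splitWeight G w P.p ((splitEquiv n).symm (c, U)) else 0) =
        w a * w b * w c * (if b ∈ S then subsetProb (keepProb G P.p a) S else 0) *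
          (if c ∈ T then subsetProb (keepProb G P.p b) T else 0) *
          (if a ∈ U then subsetProb (keepProb G P.p c) U else 0) := by
      intro S T U
      by_cases hS : b ∈ S <;> by_cases hT : c ∈ T <;> by_cases hU : a ∈ U <;>
        simp [splitGraph, splitWeight, hab, hac, hbc, ha', hb', hc', hS, hT, hU]
      ring
    simp only [key, ← Finset.mul_sum, ← Finset.sum_mul, sum_subsetProb_mem]
    have hca : G.adj c a = true := by rw [G.symm, hac]
    simp only [keepProb, hab, hbc, hca, if_true, P.symm c a]
    ring
  · rw [if_neg h]
    refine Finset.sum_eq_zero fun S _ => Finset.sum_eq_zero fun T _ =>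
      Finset.sum_eq_zero fun U _ => if_neg ?_
    contrapose! h
    simp only [splitGraph, Equiv.apply_symm_apply, Bool.and_eq_true] at h ⊢
    exact ⟨⟨h.1.1.1, h.1.2.1⟩, h.2.1⟩

/-- The weighting of the split graph. -/
noncomputable def splitWeighting {n : ℕ} (G : TriGraph n) (W : Weighting G) (P : DWeight G) :
    Weighting (splitGraph G) :=
  have h0 : ∀ v u, 0 ≤ keepProb G P.p v u := fun v u => by
    unfold keepProb
    split_ifs with h
    · exact (P.pos v u h).le
    · exact le_rfl
  have h1 : ∀ v u, keepProb G P.p v u ≤ 1 := fun v u => by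
    unfold keepProb
    split_ifs with h
    · exact P.le_one v u h
    · exact zero_le_one
  { w := splitWeight G W.w P.p
    nonneg := fun _ => mul_nonneg (W.nonneg _) (subsetProb_nonneg (h0 _) (h1 _) _)
    le_one := fun _ => mul_le_one₀ (W.le_one _) (subsetProb_nonneg (h0 _) (h1 _) _)
      (subsetProb_le_one (h0 _) (h1 _) _)
    sum_one := fun i => by
      rw [sum_classSet_splitGraph]
      simp only [splitWeight, Equiv.apply_symm_apply, ← Finset.mul_sum, sum_subsetProb, mul_one]
      exact W.sum_one i }

/-- Every doubly-weighted tripartite graph has a weighted tripartite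
graph with the same three edge densities and the same triangle density. -/
theorem stmt10 {n : ℕ} (G : TriGraph n) (W : Weighting G) (P : DWeight G) :
    ∃ (m : ℕ) (G' : TriGraph m) (W' : Weighting G'),
      edgeDensity G' W'.w 1 2 = dEdgeDensity G W.w P.p 1 2 ∧
      edgeDensity G' W'.w 0 2 = dEdgeDensity G W.w P.p 0 2 ∧
      edgeDensity G' W'.w 0 1 = dEdgeDensity G W.w P.p 0 1 ∧
      triDensity G' W'.w = dTriDensity G W.w P.p := by
  refine ⟨_, splitGraph G, splitWeighting G W P, edgeDensity_splitGraph G W.w P.p 1 2 rfl, ?_,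
    edgeDensity_splitGraph G W.w P.p 0 1 rfl, triDensity_splitGraph G W.w P⟩
  -- The cyclic orientation of this pair is from class `2` to class `0`.
  rw [edgeDensity_comm, dEdgeDensity_comm]
  exact edgeDensity_splitGraph G W.w P.p 2 0 rfl
end

section
/- Let (G,w,p) be a doubly-weighted tripartite graph with classes A, B, C satisfying: (i) w(v) > 0 for all vertices v; (ii) p(e) = 1 for all edges e between A and C and between B and C; (iii) there exist (not necessarily distinct) vertices a₀,a₁ ∈ A and b₀,b₁ ∈ B such that a₁b₁ ∈ E(G) and either a₀b₀ ∉ E(G) or p(a₀b₀) < 1; (iv) Σ_{c∈C_{a₀b₀}} w(c) < Σ_{c∈C_{a₁b₁}} w(c). Then there exists a doubly-weighted tripartite graph (G′,w,p′), on the same vertex set with the same vertex weights, having the same three edge densities as (G,w,p) and strictly smaller triangle density: t(G′,w,p′) < t(G,w,p). -/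
/-!
Extend `p` by `0` to non-edges. For fixed `AC`- and `BC`-edges of full weight, the triangle density
is linear in the weights on `A × B`: the pair `(a, b)` contributes `w a * w b * p a b` times the
weight of `C_{ab}`. Moving a small amount `s` of edge mass from `a₁b₁` to `a₀b₀` (that is, lowering
`p a₁ b₁` by `s / (w a₁ * w b₁)` and raising `p a₀ b₀` by `s / (w a₀ * w b₀)`) keeps all edge
densities and changes the triangle density by `s * (w(C_{a₀b₀}) - w(C_{a₁b₁})) < 0`. The two pairs
are distinct because their common neighbourhoods have different weights, and `s` is taken small
enough that the weight of `a₁b₁` stays positive and that of `a₀b₀` stays at most `1`.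
-/

open Finset

/-- The indicator that `{u, v}` is the unordered pair `{a, b}`. -/
noncomputable def pairInd {n : ℕ} (a b u v : Fin n) : ℝ :=
  if (u = a ∧ v = b) ∨ (u = b ∧ v = a) then 1 else 0

/-- The edge weight `p` extended by `0` to non-edges. -/
noncomputable def extWeight {n : ℕ} (G : TriGraph n) (p : Fin n → Fin n → ℝ) (u v : Fin n) : ℝ :=
  if G.adj u v then p u v else 0

theorem pairInd_symm {n : ℕ} (a b u v : Fin n) : pairInd a b u v = pairInd a b v u := by
  unfold pairInd
  congr 1
  apply propext
  tauto

theorem pairInd_eq {n : ℕ} {a b : Fin n} (hab : a ≠ b) (u v : Fin n) :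
    pairInd a b u v = (if u = a then 1 else 0) * (if v = b then 1 else 0)
      + (if u = b then 1 else 0) * (if v = a then 1 else 0) := by
  unfold pairInd
  grind

theorem dEdgeDensity_eq {n : ℕ} (G : TriGraph n) (w : Fin n → ℝ) (p : Fin n → Fin n → ℝ)
    (i j : Fin 3) :
    dEdgeDensity G w p i j
      = ∑ x ∈ classSet G i, ∑ y ∈ classSet G j, w x * w y * extWeight G p x y := by
  unfold dEdgeDensity extWeight
  refine sum_congr rfl fun x _ => sum_congr rfl fun y _ => ?_
  split_ifs <;> ring

theorem dTriDensity_eq {n : ℕ} (G : TriGraph n) (w : Fin n → ℝ) (p : Fin n → Fin n → ℝ) :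
    dTriDensity G w p
      = ∑ a ∈ classSet G 0, ∑ b ∈ classSet G 1, ∑ c ∈ classSet G 2,
        w a * w b * w c * extWeight G p a b * extWeight G p a c * extWeight G p b c := by
  unfold dTriDensity extWeight
  refine sum_congr rfl fun a _ => sum_congr rfl fun b _ => sum_congr rfl fun c _ => ?_
  cases G.adj a b <;> cases G.adj a c <;> cases G.adj b c <;> simp

/-- After normalisation by `w a * w b`, the edge mass of a single pair depends only on the classes
of its two endpoints. -/
theorem sum_pairInd {n : ℕ} (G : TriGraph n) (w : Fin n → ℝ) {a b : Fin n} (hab : a ≠ b)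
    (i j : Fin 3) :
    ∑ x ∈ classSet G i, ∑ y ∈ classSet G j, w x * w y * pairInd a b x y
      = w a * w b * ((if G.cls a = i then 1 else 0) * (if G.cls b = j then 1 else 0)
        + (if G.cls b = i then 1 else 0) * (if G.cls a = j then 1 else 0)) := by
  have key : ∀ a b : Fin n, ∑ x ∈ classSet G i, ∑ y ∈ classSet G j,
      w x * w y * ((if x = a then 1 else 0) * (if y = b then 1 else 0))
      = w a * w b * ((if G.cls a = i then 1 else 0) * (if G.cls b = j then 1 else 0)) := by
    intro a b
    have : ∀ x y : Fin n, w x * w y * ((if x = a then (1:ℝ) else 0) * (if y = b then 1 else 0))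
        = (if x = a then w x else 0) * (if y = b then w y else 0) := by
      intro x y; split_ifs <;> simp
    simp only [this, ← mul_sum, ← sum_mul, sum_ite_eq', classSet, mem_filter, mem_univ, true_and]
    split_ifs <;> simp
  simp only [pairInd_eq hab, mul_add, sum_add_distrib]
  rw [key a b, key b a]
  ring

/-- The contribution of the pair `(a, b)` to a triangle sum in which all `AC`- and `BC`-edges have
weight `1` is governed by the total weight of `C_{ab}`. -/
theorem sum_pairInd_tri {n : ℕ} (G : TriGraph n) (w : Fin n → ℝ) (p : Fin n → Fin n → ℝ)
    (h2 : ∀ u v, G.adj u v = true → (G.cls u = 2 ∨ G.cls v = 2) → p u v = 1)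
    {a₀ b₀ : Fin n} (ha : G.cls a₀ = 0) (hb : G.cls b₀ = 1) :
    ∑ a ∈ classSet G 0, ∑ b ∈ classSet G 1, ∑ c ∈ classSet G 2,
        w a * w b * w c * pairInd a₀ b₀ a b * extWeight G p a c * extWeight G p b c
      = w a₀ * w b₀ * ∑ c ∈ Cset G a₀ b₀, w c := by
  have hab : a₀ ≠ b₀ := by rintro rfl; simp [ha] at hb
  rw [sum_eq_single_of_mem a₀ (by simp [classSet, ha]),
    sum_eq_single_of_mem b₀ (by simp [classSet, hb])]
  · have hC : Cset G a₀ b₀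
        = (classSet G 2).filter (fun c => G.adj a₀ c = true ∧ G.adj b₀ c = true) := by
      ext c; simp [Cset, classSet]
    rw [hC, sum_filter, mul_sum]
    refine sum_congr rfl fun c hc => ?_
    have hc2 : G.cls c = 2 := by simpa [classSet] using hc
    have e1 := h2 a₀ c
    have e2 := h2 b₀ c
    simp only [hc2, or_true, forall_const] at e1 e2
    have e3 : pairInd a₀ b₀ a₀ b₀ = 1 := by simp [pairInd]
    rw [e3]
    unfold extWeight
    grind
  · intro b hbm hne
    refine sum_eq_zero fun c _ => ?_
    have : pairInd a₀ b₀ a₀ b = 0 := by unfold pairInd; grind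
    rw [this]; ring
  · intro a ham hne
    have ha0 : G.cls a = 0 := by simpa [classSet] using ham
    refine sum_eq_zero fun b _ => sum_eq_zero fun c _ => ?_
    have : pairInd a₀ b₀ a b = 0 := by unfold pairInd; grind
    rw [this]; ring

/-- If a doubly-weighted tripartite graph satisfies conditions
(i)-(iv) then there is a doubly-weighted tripartite graph on the same vertex set,
with the same classes and vertex weights, the same edge densities, and strictly
smaller triangle density. -/
theorem stmt11 {n : ℕ} (G : TriGraph n) (W : Weighting G) (P : DWeight G)
    (h1 : ∀ v, 0 < W.w v)
    (h2 : ∀ u v, G.adj u v = true → (G.cls u = 2 ∨ G.cls v = 2) → P.p u v = 1)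
    (a₀ a₁ b₀ b₁ : Fin n)
    (ha₀ : G.cls a₀ = 0) (ha₁ : G.cls a₁ = 0) (hb₀ : G.cls b₀ = 1) (hb₁ : G.cls b₁ = 1)
    (h3 : G.adj a₁ b₁ = true)
    (h3' : G.adj a₀ b₀ = false ∨ P.p a₀ b₀ < 1)
    (h4 : ∑ c ∈ Cset G a₀ b₀, W.w c < ∑ c ∈ Cset G a₁ b₁, W.w c) :
    ∃ (G' : TriGraph n) (P' : DWeight G'),
      G'.cls = G.cls ∧
      (∀ i j : Fin 3, dEdgeDensity G' W.w P'.p i j = dEdgeDensity G W.w P.p i j) ∧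
      dTriDensity G' W.w P'.p < dTriDensity G W.w P.p := by
  have hab₀ : a₀ ≠ b₀ := by rintro rfl; simp [ha₀] at hb₀
  have hab₁ : a₁ ≠ b₁ := by rintro rfl; simp [ha₁] at hb₁
  have hdisj : ¬ (a₀ = a₁ ∧ b₀ = b₁) := by
    rintro ⟨rfl, rfl⟩; exact lt_irrefl _ h4
  have hne01 : a₀ ≠ b₁ := by rintro rfl; simp [ha₀] at hb₁
  have hne10 : a₁ ≠ b₀ := by rintro rfl; simp [ha₁] at hb₀
  set q := extWeight G P.p with hq
  have hqsymm : ∀ u v, q u v = q v u := fun u v => by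
    simp only [hq, extWeight, G.symm u v, P.symm u v]
  have hq0 : ∀ u v, 0 ≤ q u v := fun u v => by
    simp only [hq, extWeight]
    split_ifs with h
    · exact (P.pos u v h).le
    · exact le_rfl
  have hqpos : ∀ u v, G.adj u v = true → 0 < q u v := fun u v h => by
    simpa [hq, extWeight, h] using P.pos u v h
  have hq1 : ∀ u v, q u v ≤ 1 := fun u v => by
    simp only [hq, extWeight]
    split_ifs with h
    · exact P.le_one u v h
    · exact zero_le_one
  have hq00 : q a₀ b₀ < 1 := by
    simp only [hq, extWeight]
    rcases h3' with h | h
    · simp [h]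
    · split_ifs
      · exact h
      · exact one_pos
  have hw₀ : 0 < W.w a₀ * W.w b₀ := mul_pos (h1 _) (h1 _)
  have hw₁ : 0 < W.w a₁ * W.w b₁ := mul_pos (h1 _) (h1 _)
  -- `s` is the edge mass moved; halving in the second bound keeps the weight of `a₁b₁` positive.
  obtain ⟨s, hs, hs₀, hs₁⟩ : ∃ s : ℝ, 0 < s ∧ s / (W.w a₀ * W.w b₀) ≤ 1 - q a₀ b₀ ∧
      s / (W.w a₁ * W.w b₁) < q a₁ b₁ := by
    have k0 : 0 < (1 - q a₀ b₀) * (W.w a₀ * W.w b₀) := mul_pos (by linarith) hw₀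
    have k1 : 0 < q a₁ b₁ * (W.w a₁ * W.w b₁) := mul_pos (hqpos _ _ h3) hw₁
    refine ⟨min ((1 - q a₀ b₀) * (W.w a₀ * W.w b₀)) (q a₁ b₁ * (W.w a₁ * W.w b₁) / 2),
      lt_min k0 (by linarith), ?_, ?_⟩
    · rw [div_le_iff₀ hw₀]; exact min_le_left _ _
    · rw [div_lt_iff₀ hw₁]
      exact (min_le_right _ _).trans_lt (by linarith)
  set d₀ := s / (W.w a₀ * W.w b₀) with hd₀
  set d₁ := s / (W.w a₁ * W.w b₁) with hd₁
  have hd₀pos : 0 < d₀ := div_pos hs hw₀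
  have hd₁pos : 0 < d₁ := div_pos hs hw₁
  let q' : Fin n → Fin n → ℝ := fun u v =>
    q u v + d₀ * pairInd a₀ b₀ u v - d₁ * pairInd a₁ b₁ u v
  have hq'symm : ∀ u v, q' u v = q' v u := fun u v => by
    simp only [q', hqsymm u v, pairInd_symm a₀ b₀ u v, pairInd_symm a₁ b₁ u v]
  -- The support of `q'` is the old edge set together with `a₀b₀`.
  let G' : TriGraph n :=
    { cls := G.cls
      adj := fun u v => G.adj u v || decide ((u = a₀ ∧ v = b₀) ∨ (u = b₀ ∧ v = a₀))
      symm := fun u v => by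
        rw [G.symm u v]; congr 1; apply decide_eq_decide.2; tauto
      tripart := fun u v h => by
        rw [Bool.or_eq_true, decide_eq_true_iff] at h
        rcases h with h | ⟨rfl, rfl⟩ | ⟨rfl, rfl⟩
        · exact G.tripart u v h
        · simp [ha₀, hb₀]
        · simp [ha₀, hb₀] }
  have hadj' : ∀ u v, G'.adj u v = true ↔
      G.adj u v = true ∨ ((u = a₀ ∧ v = b₀) ∨ (u = b₀ ∧ v = a₀)) := fun u v => by
    simp only [G', Bool.or_eq_true, decide_eq_true_iff]
  have hcases : ∀ u v, ((u = a₁ ∧ v = b₁) ∨ (u = b₁ ∧ v = a₁)) →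
      q u v = q a₁ b₁ ∧ G.adj u v = true ∧ ¬ ((u = a₀ ∧ v = b₀) ∨ (u = b₀ ∧ v = a₀)) := by
    rintro u v (⟨rfl, rfl⟩ | ⟨rfl, rfl⟩)
    · exact ⟨rfl, h3, by grind⟩
    · exact ⟨hqsymm _ _, (G.symm _ _).trans h3, by grind⟩
  have hcases₀ : ∀ u v, ((u = a₀ ∧ v = b₀) ∨ (u = b₀ ∧ v = a₀)) → q u v = q a₀ b₀ := by
    rintro u v (⟨rfl, rfl⟩ | ⟨rfl, rfl⟩)
    · rfl
    · exact hqsymm _ _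
  let P' : DWeight G' :=
    { p := q'
      symm := hq'symm
      pos := fun u v h => by
        rw [hadj'] at h
        have i0 := hq0 u v
        have i1 := hqpos u v
        have i2 := hcases u v
        simp only [q', pairInd]
        split_ifs with c0 c1 c1
        · exact absurd c0 (i2 c1).2.2
        · linarith
        · linarith [(i2 c1).1]
        · linarith [i1 (h.resolve_right c0)]
      le_one := fun u v _ => by
        have i0 := hq1 u v
        have i2 := hcases u v
        have i3 := hcases₀ u v
        simp only [q', pairInd]
        split_ifs with c0 c1 c1
        · exact absurd c0 (i2 c1).2.2
        · linarith [i3 c0]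
        · linarith
        · linarith }
  have hext : ∀ u v, extWeight G' P'.p u v = q' u v := by
    intro u v
    by_cases h : G'.adj u v = true
    · simp [extWeight, h, P']
    · have h' := h
      rw [hadj', not_or] at h'
      have c1 : ¬ ((u = a₁ ∧ v = b₁) ∨ (u = b₁ ∧ v = a₁)) := fun c => h'.1 (hcases u v c).2.1
      have e : q u v = 0 := by simp [hq, extWeight, h'.1]
      simp only [extWeight, h, q', pairInd, if_neg h'.2, if_neg c1, e]
      simp
  have hcls : ∀ i, classSet G' i = classSet G i := fun i => rfl
  refine ⟨G', P', rfl, fun i j => ?_, ?_⟩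
  · rw [dEdgeDensity_eq, dEdgeDensity_eq]
    simp only [hext, hcls]
    have e : ∀ x y, W.w x * W.w y * q' x y = W.w x * W.w y * q x y
        + d₀ * (W.w x * W.w y * pairInd a₀ b₀ x y)
        - d₁ * (W.w x * W.w y * pairInd a₁ b₁ x y) := fun x y => by simp only [q']; ring
    simp only [e, sum_sub_distrib, sum_add_distrib, ← mul_sum]
    rw [sum_pairInd G W.w hab₀, sum_pairInd G W.w hab₁, ← mul_assoc d₀, ← mul_assoc d₁,
      hd₀, hd₁, div_mul_cancel₀ _ hw₀.ne', div_mul_cancel₀ _ hw₁.ne', ha₀, ha₁, hb₀, hb₁]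
    ring
  · rw [dTriDensity_eq, dTriDensity_eq]
    simp only [hext, hcls]
    -- The `AC`- and `BC`-weights are untouched, as neither modified pair meets `C`.
    have hC : ∀ x, ∀ c ∈ classSet G 2, q' x c = q x c := by
      intro x c hc
      have hc2 : G.cls c = 2 := by simpa [classSet] using hc
      have c0 : ¬ ((x = a₀ ∧ c = b₀) ∨ (x = b₀ ∧ c = a₀)) := by
        rintro (⟨_, rfl⟩ | ⟨_, rfl⟩)
        · simp [hb₀] at hc2
        · simp [ha₀] at hc2
      have c1 : ¬ ((x = a₁ ∧ c = b₁) ∨ (x = b₁ ∧ c = a₁)) := by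
        rintro (⟨_, rfl⟩ | ⟨_, rfl⟩)
        · simp [hb₁] at hc2
        · simp [ha₁] at hc2
      simp only [q', pairInd, if_neg c0, if_neg c1]
      ring
    have e : ∑ a ∈ classSet G 0, ∑ b ∈ classSet G 1, ∑ c ∈ classSet G 2,
          W.w a * W.w b * W.w c * q' a b * q' a c * q' b c
        = ∑ a ∈ classSet G 0, ∑ b ∈ classSet G 1, ∑ c ∈ classSet G 2,
          (W.w a * W.w b * W.w c * q a b * q a c * q b c
          + d₀ * (W.w a * W.w b * W.w c * pairInd a₀ b₀ a b * q a c * q b c)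
          - d₁ * (W.w a * W.w b * W.w c * pairInd a₁ b₁ a b * q a c * q b c)) := by
      refine sum_congr rfl fun a _ => sum_congr rfl fun b _ => sum_congr rfl fun c hc => ?_
      rw [hC a c hc, hC b c hc]
      simp only [q']
      ring
    rw [e]
    simp only [sum_sub_distrib, sum_add_distrib, ← mul_sum]
    rw [hq, sum_pairInd_tri G W.w P.p h2 ha₀ hb₀, sum_pairInd_tri G W.w P.p h2 ha₁ hb₁,
      ← mul_assoc d₀, ← mul_assoc d₁, hd₀, hd₁,
      div_mul_cancel₀ _ hw₀.ne', div_mul_cancel₀ _ hw₁.ne']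
    linarith [mul_lt_mul_of_pos_left h4 hs]
end

section
/- Let (G,w) ∈ Tri(α,β,γ). If there exist (not necessarily distinct) vertices a₀,a₁ ∈ A and b₀,b₁ ∈ B such that a₀b₀ ∉ E(G), a₁b₁ ∈ E(G), and C_{a₀b₀} is a proper subset of C_{a₁b₁}, then (G,w) is either not extremal or not vertex minimal. -/
/-!
Suppose `(G, W)` is both extremal and vertex minimal. Vertex minimality forces every weight to be
positive, since a vertex of weight `0` can be deleted without changing any density
(`weight_pos_of_vertexMinimal`). Move a little `A`-`B` edge weight from `a₁b₁` to `a₀b₀`: split off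
from `a₀` a twin of weight `s` that is also joined to `b₀`, and split off from `a₁` a twin of
weight `r` that is not joined to `b₁`, where `s * w b₀ = r * w b₁ > 0`. By `exists_split`, each step
keeps the densities `α` and `β`; the two changes of `γ` cancel, and the triangle density changes by
`s * w b₀ * (w(C_{a₀b₀}) - w(C_{a₁b₁}))`. This is negative, because `C_{a₀b₀}` is a proper subset
of `C_{a₁b₁}` and all weights are positive, contradicting extremality.
-/


open Finset

/-! ### Densities as iterated linear functionals of the weights -/

lemma edgeDensity_eq {n : ℕ} (G : TriGraph n) (w : Fin n → ℝ) (i j : Fin 3) :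
    edgeDensity G w i j = ∑ x, w x * ((if G.cls x = i then 1 else 0) *
      ∑ y, w y * (if G.cls y = j ∧ G.adj x y = true then 1 else 0)) := by
  unfold edgeDensity classSet
  rw [Finset.sum_filter]
  refine Finset.sum_congr rfl fun x _ => ?_
  rw [Finset.sum_filter]
  by_cases hx : G.cls x = i
  · simp only [hx, if_true, one_mul, Finset.mul_sum]
    refine Finset.sum_congr rfl fun y _ => ?_
    by_cases hy : G.cls y = j <;> by_cases h : G.adj x y = true <;> simp [hy, h]
  · simp [hx]

lemma triDensity_eq {n : ℕ} (G : TriGraph n) (w : Fin n → ℝ) :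
    triDensity G w = ∑ x, w x * ((if G.cls x = 0 then 1 else 0) *
      ∑ y, w y * ((if G.cls y = 1 ∧ G.adj x y = true then 1 else 0) *
        ∑ z, w z * (if G.cls z = 2 ∧ G.adj x z = true ∧ G.adj y z = true then 1 else 0))) := by
  unfold triDensity classSet
  rw [Finset.sum_filter]
  refine Finset.sum_congr rfl fun x _ => ?_
  by_cases hx : G.cls x = 0
  · simp only [hx, if_true, one_mul]
    rw [Finset.sum_filter, Finset.mul_sum]
    refine Finset.sum_congr rfl fun y _ => ?_
    by_cases hy : G.cls y = 1
    · by_cases h : G.adj x y = true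
      · simp only [hy, h, if_true, one_mul, Finset.mul_sum, and_self]
        rw [Finset.sum_filter]
        refine Finset.sum_congr rfl fun z _ => ?_
        by_cases hz : G.cls z = 2 <;> by_cases h1 : G.adj x z = true <;>
          by_cases h2 : G.adj y z = true <;> simp [hz, h1, h2, mul_assoc]
      · simp [h]
    · simp [hy]
  · simp [hx]

lemma sum_one_eq {n : ℕ} (G : TriGraph n) (w : Fin n → ℝ) (i : Fin 3) :
    ∑ v ∈ classSet G i, w v = ∑ v, w v * (if G.cls v = i then 1 else 0) := by
  simp [classSet, Finset.sum_filter]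

/-- The total weight of `C_{ab}`. -/
noncomputable def cWeight {n : ℕ} (G : TriGraph n) (w : Fin n → ℝ) (a b : Fin n) : ℝ :=
  ∑ c, w c * (if G.cls c = 2 ∧ G.adj a c = true ∧ G.adj b c = true then 1 else 0)

lemma cWeight_eq {n : ℕ} (G : TriGraph n) (w : Fin n → ℝ) (a b : Fin n) :
    cWeight G w a b = ∑ c ∈ Cset G a b, w c := by
  simp [cWeight, Cset, Finset.sum_filter]

lemma triDensity_nonneg {n : ℕ} (G : TriGraph n) (W : Weighting G) :
    0 ≤ triDensity G W.w := by
  unfold triDensity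
  refine Finset.sum_nonneg fun a _ => Finset.sum_nonneg fun b _ => Finset.sum_nonneg fun c _ => ?_
  have := W.nonneg a
  have := W.nonneg b
  have := W.nonneg c
  split_ifs <;> positivity

lemma Tmin_le {α β γ : ℝ} {n : ℕ} (G : TriGraph n) (W : Weighting G) (h : InTri G W α β γ) :
    Tmin α β γ ≤ triDensity G W.w := by
  refine csInf_le ⟨0, ?_⟩ ⟨n, G, W, h, rfl⟩
  rintro t ⟨m, G', W', -, rfl⟩
  exact triDensity_nonneg G' W'

/-! ### Deleting a vertex of weight zero -/

/-- The graph `G` with the vertex `v` deleted. -/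
def TriGraph.erase {m : ℕ} (G : TriGraph (m + 1)) (v : Fin (m + 1)) : TriGraph m where
  cls x := G.cls (v.succAbove x)
  adj x y := G.adj (v.succAbove x) (v.succAbove y)
  symm _ _ := G.symm _ _
  tripart _ _ h := G.tripart _ _ h

lemma sum_erase {m : ℕ} (w : Fin (m + 1) → ℝ) (v : Fin (m + 1)) (hv : w v = 0)
    (F : Fin (m + 1) → ℝ) :
    ∑ x, w x * F x = ∑ x, w (v.succAbove x) * F (v.succAbove x) := by
  rw [Fin.sum_univ_succAbove _ v, hv]
  simp

lemma weight_pos_of_vertexMinimal {n : ℕ} (G : TriGraph n) (W : Weighting G) {α β γ : ℝ}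
    (h : VertexMinimal G W α β γ) (v : Fin n) : 0 < W.w v := by
  rcases (W.nonneg v).lt_or_eq with hv | hv
  · exact hv
  exfalso
  obtain _ | m := n
  · exact v.elim0
  replace hv := hv.symm
  have hedge : ∀ i j, edgeDensity (G.erase v) (fun x => W.w (v.succAbove x)) i j =
      edgeDensity G W.w i j := by
    intro i j
    simp only [edgeDensity_eq, sum_erase W.w v hv, TriGraph.erase]
  obtain ⟨⟨h1, h2, h3⟩, hmin⟩ := h
  refine hmin ⟨m, G.erase v,
    ⟨fun x => W.w (v.succAbove x), fun _ => W.nonneg _, fun _ => W.le_one _, fun i => ?_⟩,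
    Nat.lt_succ_self m, ⟨?_, ?_, ?_⟩, ?_⟩
  · have := W.sum_one i
    rw [sum_one_eq, sum_erase W.w v hv] at this
    rw [sum_one_eq]
    exact this
  · exact (hedge _ _).trans h1
  · exact (hedge _ _).trans h2
  · exact (hedge _ _).trans h3
  · simp only [triDensity_eq, sum_erase W.w v hv, TriGraph.erase]

/-! ### Splitting off a modified twin of a vertex -/

/-- The retraction of `Fin (n + 1)` onto `Fin n` that sends the last vertex to `a`. -/
def twinProj {n : ℕ} (a : Fin n) : Fin (n + 1) → Fin n :=
  Fin.lastCases a fun v => v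

@[simp] lemma twinProj_last {n : ℕ} (a : Fin n) : twinProj a (Fin.last n) = a := by
  simp [twinProj]

@[simp] lemma twinProj_castSucc {n : ℕ} (a v : Fin n) : twinProj a v.castSucc = v := by
  simp [twinProj]

/-- The graph `G` with a twin of `a` added as last vertex. The twin has the neighbours of `a`,
except that its adjacency to `b` is prescribed by `f`. -/
def TriGraph.twin {n : ℕ} (G : TriGraph n) (a b : Fin n) (hab : G.cls a ≠ G.cls b) (f : Bool) :
    TriGraph (n + 1) where
  cls x := G.cls (twinProj a x)
  adj x y := if (x = Fin.last n ∧ twinProj a y = b) ∨ (y = Fin.last n ∧ twinProj a x = b) then f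
    else G.adj (twinProj a x) (twinProj a y)
  symm x y := by
    rw [G.symm]
    simp only [or_comm]
  tripart x y h := by
    split_ifs at h with hc
    · rcases hc with ⟨rfl, hy⟩ | ⟨rfl, hx⟩
      · simpa [hy] using hab
      · simpa [hx] using hab.symm
    · exact G.tripart _ _ h

/-- The weights `w` with the amount `s` moved from `a` to its twin. -/
def twinWeight {n : ℕ} (w : Fin n → ℝ) (a : Fin n) (s : ℝ) : Fin (n + 1) → ℝ :=
  Fin.lastCases s fun v => w v - if v = a then s else 0

@[simp] lemma twinWeight_last {n : ℕ} (w : Fin n → ℝ) (a : Fin n) (s : ℝ) :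
    twinWeight w a s (Fin.last n) = s := by
  simp [twinWeight]

@[simp] lemma twinWeight_castSucc {n : ℕ} (w : Fin n → ℝ) (a v : Fin n) (s : ℝ) :
    twinWeight w a s v.castSucc = w v - if v = a then s else 0 := by
  simp [twinWeight]

/-- A linear functional of the weights changes under splitting only through the difference of its
coefficients at the twin and at `a`. -/
lemma sum_twin {n : ℕ} (w : Fin n → ℝ) (a : Fin n) (s : ℝ) (F : Fin (n + 1) → ℝ) :
    ∑ x, twinWeight w a s x * F x =
      ∑ v, w v * F v.castSucc + s * (F (Fin.last n) - F a.castSucc) := by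
  rw [Fin.sum_univ_castSucc]
  simp only [twinWeight_castSucc, twinWeight_last, sub_mul, Finset.sum_sub_distrib, ite_mul,
    zero_mul, Finset.sum_ite_eq', Finset.mem_univ, if_true]
  ring

/-- The effect of splitting off from `a ∈ A` a twin of weight `s` whose adjacency to `b ∈ B` is
`f`: `α` and `β` are unchanged, and `γ` and the triangle density vary with the weight of the pair
`ab` that is gained or lost. -/
lemma exists_split {n : ℕ} (G : TriGraph n) (W : Weighting G) (a b : Fin n) (ha : G.cls a = 0)
    (hb : G.cls b = 1) (f : Bool) (s : ℝ) (hs : 0 ≤ s) (hsa : s ≤ W.w a) :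
    ∃ (G' : TriGraph (n + 1)) (W' : Weighting G'),
      (∀ v, G'.cls v.castSucc = G.cls v) ∧
      (∀ u v, G'.adj u.castSucc v.castSucc = G.adj u v) ∧
      (∀ v, W'.w v.castSucc = W.w v - if v = a then s else 0) ∧
      (∀ u v, cWeight G' W'.w u.castSucc v.castSucc = cWeight G W.w u v) ∧
      edgeDensity G' W'.w 1 2 = edgeDensity G W.w 1 2 ∧
      edgeDensity G' W'.w 0 2 = edgeDensity G W.w 0 2 ∧
      edgeDensity G' W'.w 0 1 = edgeDensity G W.w 0 1 +
        s * W.w b * ((if f = true then 1 else 0) - if G.adj a b = true then 1 else 0) ∧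
      triDensity G' W'.w = triDensity G W.w + s * W.w b *
        ((if f = true then 1 else 0) - if G.adj a b = true then 1 else 0) * cWeight G W.w a b := by
  have hab : G.cls a ≠ G.cls b := by rw [ha, hb]; decide
  set G' := G.twin a b hab f with hG'
  have hcl : G'.cls (Fin.last n) = 0 := by simp [hG', TriGraph.twin, ha]
  have hc : ∀ v, G'.cls v.castSucc = G.cls v := by simp [hG', TriGraph.twin]
  have hadj : ∀ u v, G'.adj u.castSucc v.castSucc = G.adj u v := by
    intro u v
    simp [hG', TriGraph.twin, Fin.castSucc_ne_last]
  have hadjl : ∀ v, G'.adj (Fin.last n) v.castSucc = if v = b then f else G.adj a v := by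
    intro v
    simp [hG', TriGraph.twin, Fin.castSucc_ne_last]
  let W' : Weighting G' :=
    { w := twinWeight W.w a s
      nonneg := by
        intro v
        refine Fin.lastCases ?_ (fun v => ?_) v
        · simpa using hs
        · rw [twinWeight_castSucc]
          split_ifs with h
          · subst h; linarith
          · simpa using W.nonneg v
      le_one := by
        intro v
        refine Fin.lastCases ?_ (fun v => ?_) v
        · rw [twinWeight_last]; linarith [W.le_one a]
        · rw [twinWeight_castSucc]
          have := W.le_one v
          split_ifs with h <;> linarith
      sum_one := by
        intro i
        have := W.sum_one i
        rw [sum_one_eq] at this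
        rw [sum_one_eq, sum_twin]
        simpa [hc, hcl, ha] using this }
  have hW : W'.w = twinWeight W.w a s := rfl
  -- The neighbourhoods in a class other than `A` do not see the splitting.
  have hrow : ∀ (j : Fin 3), j ≠ 0 → ∀ (x : Fin (n + 1)) (F : Fin (n + 1) → ℝ),
      ∑ y, twinWeight W.w a s y * ((if G'.cls y = j ∧ G'.adj x y = true then 1 else 0) * F y) =
      ∑ y, W.w y * ((if G.cls y = j ∧ G'.adj x y.castSucc = true then 1 else 0)
        * F y.castSucc) := by
    intro j hj x F
    rw [sum_twin]
    simp [hc, hcl, ha, hj.symm]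
  have hrow1 : ∀ (j : Fin 3), j ≠ 0 → ∀ (x : Fin (n + 1)),
      ∑ y, twinWeight W.w a s y * (if G'.cls y = j ∧ G'.adj x y = true then 1 else 0) =
      ∑ y, W.w y * (if G.cls y = j ∧ G'.adj x y.castSucc = true then 1 else 0) := by
    intro j hj x
    simpa using hrow j hj x fun _ => 1
  have hrow2 : ∀ (x y : Fin (n + 1)),
      ∑ z, twinWeight W.w a s z *
        (if G'.cls z = 2 ∧ G'.adj x z = true ∧ G'.adj y z = true then 1 else 0) =
      ∑ z, W.w z * (if G.cls z = 2 ∧ G'.adj x z.castSucc = true ∧ G'.adj y z.castSucc = true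
        then 1 else 0) := by
    intro x y
    rw [sum_twin]
    simp [hc, hcl, ha]
  -- The `C`-neighbours of the twin are those of `a`.
  have hC : ∀ z, (G.cls z = 2 ∧ G'.adj (Fin.last n) z.castSucc = true) ↔
      (G.cls z = 2 ∧ G.adj a z = true) := by
    intro z
    refine and_congr_right fun hz => ?_
    have : z ≠ b := by
      rintro rfl
      rw [hb] at hz
      exact absurd hz (by decide)
    rw [hadjl, if_neg this]
  -- Only `b` contributes to the difference between the `B`-neighbourhoods of the twin and of `a`.
  have hB : ∀ F : Fin n → ℝ,
      ∑ y, W.w y * ((if G.cls y = 1 ∧ G'.adj (Fin.last n) y.castSucc = true then 1 else 0) * F y) -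
      ∑ y, W.w y * ((if G.cls y = 1 ∧ G.adj a y = true then 1 else 0) * F y) =
      W.w b * ((if f = true then 1 else 0) - if G.adj a b = true then 1 else 0) * F b := by
    intro F
    rw [← Finset.sum_sub_distrib, Finset.sum_eq_single b]
    · simp only [hadjl, hb, true_and, if_true]
      ring
    · intro y _ hy
      simp [hadjl, hy]
    · simp
  refine ⟨G', W', hc, hadj, fun v => twinWeight_castSucc _ _ _ _, ?_, ?_, ?_, ?_, ?_⟩
  · intro u v
    simp only [cWeight, hW, hrow2, hadj]
  · rw [edgeDensity_eq, edgeDensity_eq, hW]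
    simp only [hrow1 2 (by decide)]
    rw [sum_twin]
    simp [hc, hcl, ha, hadj]
  · rw [edgeDensity_eq, edgeDensity_eq, hW]
    simp only [hrow1 2 (by decide)]
    rw [sum_twin]
    simp only [hC, hc, hcl, ha, hadj, sub_self, mul_zero, add_zero]
  · rw [edgeDensity_eq, edgeDensity_eq, hW]
    simp only [hrow1 1 (by decide)]
    rw [sum_twin]
    have := hB fun _ => 1
    simp only [mul_one] at this
    simp only [hc, hcl, ha, hadj, if_true, one_mul, this]
    ring
  · rw [triDensity_eq, triDensity_eq, hW]
    simp only [hrow2, hrow 1 (by decide)]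
    rw [sum_twin]
    have := hB fun y => cWeight G W.w a y
    simp only [cWeight] at this
    simp only [← and_assoc, hC] at this ⊢
    simp only [hc, hcl, ha, hadj, if_true, one_mul, this, cWeight]
    simp only [and_assoc]
    ring

/-! ### Moving edge weight from `a₁b₁` to `a₀b₀` -/

/-- If (G,w) ∈ Tri(α,β,γ) and there are a₀,a₁ ∈ A, b₀,b₁ ∈ B with
a₀b₀ ∉ E(G), a₁b₁ ∈ E(G) and C_{a₀b₀} ⊊ C_{a₁b₁}, then (G,w) is not extremal or
not vertex minimal. -/
theorem stmt12 (α β γ : ℝ) {n : ℕ} (G : TriGraph n) (W : Weighting G)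
    (h : InTri G W α β γ)
    (a₀ a₁ b₀ b₁ : Fin n)
    (ha₀ : G.cls a₀ = 0) (ha₁ : G.cls a₁ = 0) (hb₀ : G.cls b₀ = 1) (hb₁ : G.cls b₁ = 1)
    (h1 : G.adj a₀ b₀ = false) (h2 : G.adj a₁ b₁ = true)
    (h3 : Cset G a₀ b₀ ⊂ Cset G a₁ b₁) :
    ¬ Extremal G W α β γ ∨ ¬ VertexMinimal G W α β γ := by
  by_contra hcon
  rw [not_or, not_not, not_not] at hcon
  obtain ⟨hext, hmin⟩ := hcon
  have hpos := weight_pos_of_vertexMinimal G W hmin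
  have hlt : cWeight G W.w a₀ b₀ < cWeight G W.w a₁ b₁ := by
    obtain ⟨c, hc1, hc0⟩ := Finset.exists_of_ssubset h3
    rw [cWeight_eq, cWeight_eq]
    exact Finset.sum_lt_sum_of_subset h3.subset hc1 hc0 (hpos c) fun v _ _ => W.nonneg v
  -- The factor `1 / 2` leaves room for both twins when `a₀ = a₁`.
  obtain ⟨ε, hε, hε0, hε1⟩ : ∃ ε : ℝ, 0 < ε ∧ ε ≤ W.w a₀ / 2 ∧ ε ≤ W.w a₁ / 2 :=
    ⟨min (W.w a₀) (W.w a₁) / 2, half_pos (lt_min (hpos _) (hpos _)),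
      by linarith [min_le_left (W.w a₀) (W.w a₁)], by linarith [min_le_right (W.w a₀) (W.w a₁)]⟩
  have hsε : ε * W.w b₁ ≤ ε := mul_le_of_le_one_right hε.le (W.le_one _)
  have hrε : ε * W.w b₀ ≤ ε := mul_le_of_le_one_right hε.le (W.le_one _)
  have hs : 0 < ε * W.w b₁ := mul_pos hε (hpos _)
  have hr : 0 < ε * W.w b₀ := mul_pos hε (hpos _)
  obtain ⟨G₁, W₁, hc, hadj, hw, hC, e12, e02, e01, et⟩ :=
    exists_split G W a₀ b₀ ha₀ hb₀ true (ε * W.w b₁) hs.le (by linarith)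
  have hb₁₀ : b₁ ≠ a₀ := by
    rintro rfl
    rw [ha₀] at hb₁
    exact absurd hb₁ (by decide)
  obtain ⟨G₂, W₂, -, -, -, -, e12', e02', e01', et'⟩ :=
    exists_split G₁ W₁ a₁.castSucc b₁.castSucc (by rw [hc, ha₁]) (by rw [hc, hb₁]) false
      (ε * W.w b₀) hr.le (by
        rw [hw]
        split_ifs
        · linarith
        · linarith)
  obtain ⟨hα, hβ, hγ⟩ := h
  simp only [hadj, hw, hC, h1, h2, if_neg hb₁₀, if_true, Bool.false_eq_true, if_false]
    at e01 et e01' et'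
  have hle := Tmin_le G₂ W₂ (α := α) (β := β) (γ := γ)
    ⟨by rw [e12', e12, hα], by rw [e02', e02, hβ], by rw [e01', e01, hγ]; ring⟩
  rw [← hext.2, et', et] at hle
  nlinarith [mul_pos (mul_pos hs (hpos b₀)) (sub_pos.2 hlt)]
end

section
/- If (α,β,γ) ∈ R₂ then there exists a weighting w of H₇ such that (H₇,w) ∈ Tri(α,β,γ) and t(H₇,w) = 2√(αβ(1−γ)) + 2γ − 2; furthermore t(H₇,w) ≤ t(H₇,w′) for every weighting w′ such that (H₇,w′) ∈ Tri(α,β,γ). -/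
/-!
Write `x = w a₁`, `y = w b₁`, `p = w c₁`, `r = w c₃`. In `H₇` the densities are
`γ = 1 - (1 - x) y`, `β = x p + (1 - x)`, `α = y + (1 - y) r` and
`t = x y p + (1 - x)(1 - y) r`. Eliminating `p` and `r` through the density equations gives
`t = β y + α (1 - x) + 2γ - 2`, and since `y (1 - x) = 1 - γ`, AM-GM yields
`t ≥ 2 √(αβ(1 - γ)) + 2γ - 2` for every admissible weighting.

Equality holds when `β y = α (1 - x) = s` with `s = √(αβ(1 - γ))`. That choice leaves
`p = 1 - (1 - β) / x` and `r = 1 - (1 - α) / (1 - y)`; the inequality `αβ + γ > 1` makes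
`p` and `r` nonnegative, and `w c₂ = 1 - p - r ≥ 0` is equivalent to `2 s ≥ α + β - γ`, which
follows from `4 s² - (α + β - γ)² = -Δ > 0`.
-/


open Finset

lemma classSet_H7_zero : classSet H7 0 = {0, 1} := by decide
lemma classSet_H7_one : classSet H7 1 = {2, 3} := by decide
lemma classSet_H7_two : classSet H7 2 = {4, 5, 6} := by decide

lemma edgeDensity_H7_BC (w : Fin 7 → ℝ) :
    edgeDensity H7 w 1 2 = w 2 * w 4 + w 2 * w 5 + w 2 * w 6 + w 3 * w 6 := by
  rw [edgeDensity, classSet_H7_one, classSet_H7_two]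
  simp [H7, mkAdj]
  ring

lemma edgeDensity_H7_AC (w : Fin 7 → ℝ) :
    edgeDensity H7 w 0 2 = w 0 * w 4 + w 1 * w 4 + w 1 * w 5 + w 1 * w 6 := by
  rw [edgeDensity, classSet_H7_zero, classSet_H7_two]
  simp [H7, mkAdj]
  ring

lemma edgeDensity_H7_AB (w : Fin 7 → ℝ) :
    edgeDensity H7 w 0 1 = w 0 * w 2 + w 0 * w 3 + w 1 * w 3 := by
  rw [edgeDensity, classSet_H7_zero, classSet_H7_one]
  simp [H7, mkAdj]

lemma triDensity_H7 (w : Fin 7 → ℝ) :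
    triDensity H7 w = w 0 * w 2 * w 4 + w 1 * w 3 * w 6 := by
  rw [triDensity, classSet_H7_zero, classSet_H7_one, classSet_H7_two]
  simp [H7, mkAdj]

lemma Weighting.H7_sums (W : Weighting H7) :
    W.w 0 + W.w 1 = 1 ∧ W.w 2 + W.w 3 = 1 ∧ W.w 4 + W.w 5 + W.w 6 = 1 := by
  have h0 := W.sum_one 0
  have h1 := W.sum_one 1
  have h2 := W.sum_one 2
  simp [classSet_H7_zero, classSet_H7_one, classSet_H7_two] at h0 h1 h2
  exact ⟨h0, h1, by linarith⟩

/-- The missing edge `a₂b₁` carries weight `1 - γ`, and the triangle density depends only on the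
edge densities and the weights of `a₂` and `b₁`. -/
lemma triDensity_H7_of_inTri {α β γ : ℝ} (W : Weighting H7) (h : InTri H7 W α β γ) :
    W.w 1 * W.w 2 = 1 - γ ∧
      triDensity H7 W.w = β * W.w 2 + α * W.w 1 + 2 * γ - 2 := by
  obtain ⟨hα, hβ, hγ⟩ := h
  rw [edgeDensity_H7_BC] at hα
  rw [edgeDensity_H7_AC] at hβ
  rw [edgeDensity_H7_AB] at hγ
  rw [triDensity_H7]
  obtain ⟨hA, hB, hC⟩ := W.H7_sums
  have e0 : W.w 0 = 1 - W.w 1 := by linarith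
  have e3 : W.w 3 = 1 - W.w 2 := by linarith
  have e5 : W.w 5 = 1 - W.w 4 - W.w 6 := by linarith
  rw [← hα, ← hβ, ← hγ, e0, e3, e5]
  constructor <;> ring

lemma le_triDensity_H7 {α β γ : ℝ} (hα : 0 ≤ α) (hβ : 0 ≤ β) (W : Weighting H7)
    (h : InTri H7 W α β γ) :
    2 * Real.sqrt (α * β * (1 - γ)) + 2 * γ - 2 ≤ triDensity H7 W.w := by
  obtain ⟨hprod, ht⟩ := triDensity_H7_of_inTri W h
  have h1 := W.nonneg 1
  have h2 := W.nonneg 2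
  have hsqrt : Real.sqrt (α * β * (1 - γ)) ≤ (β * W.w 2 + α * W.w 1) / 2 := by
    apply Real.sqrt_le_iff.mpr
    refine ⟨by positivity, ?_⟩
    rw [← hprod]
    nlinarith [sq_nonneg (β * W.w 2 - α * W.w 1)]
  linarith

/-- The weighting of `H₇` with parameters `u = w a₂`, `y = w b₁`, `p = w c₁`, `r = w c₃`. -/
noncomputable def weightingH7 (u y p r : ℝ) (hu : 0 ≤ u) (hu1 : u ≤ 1) (hy : 0 ≤ y)
    (hy1 : y ≤ 1) (hp : 0 ≤ p) (hr : 0 ≤ r) (hpr : p + r ≤ 1) : Weighting H7 where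
  w := ![1 - u, u, y, 1 - y, p, 1 - p - r, r]
  nonneg v := by fin_cases v <;> simp <;> linarith
  le_one v := by fin_cases v <;> simp <;> linarith
  sum_one i := by
    fin_cases i
    · simp [classSet_H7_zero]
    · simp [classSet_H7_one]
    · simp [classSet_H7_two]

/-- If (α,β,γ) ∈ R₂ then H₇ has a weighting in Tri(α,β,γ) with
triangle density 2√(αβ(1−γ)) + 2γ − 2, minimal among all weightings of H₇
in Tri(α,β,γ). -/
theorem stmt13 (α β γ : ℝ) (h : inR2 α β γ) :
    ∃ W : Weighting H7, InTri H7 W α β γ ∧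
      triDensity H7 W.w = 2 * Real.sqrt (α * β * (1 - γ)) + 2 * γ - 2 ∧
      ∀ W' : Weighting H7, InTri H7 W' α β γ →
        triDensity H7 W.w ≤ triDensity H7 W'.w := by
  obtain ⟨⟨⟨⟨hα0, hα1⟩, ⟨hβ0, hβ1⟩, ⟨-, hγ1⟩⟩, hR, -, -⟩, hΔ⟩ := h
  have hαβ : 0 < α * β := by linarith
  have hα : 0 < α := lt_of_le_of_ne hα0 (by rintro rfl; simp at hαβ)
  have hβ : 0 < β := lt_of_le_of_ne hβ0 (by rintro rfl; simp at hαβ)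
  set s := Real.sqrt (α * β * (1 - γ)) with hs
  have hs0 : 0 ≤ s := Real.sqrt_nonneg _
  have hs2 : s * s = α * β * (1 - γ) :=
    Real.mul_self_sqrt (mul_nonneg hαβ.le (by linarith))
  have hs_lt : s < α * β := by nlinarith
  have hs_ge : α + β - γ ≤ 2 * s := by
    unfold Delta at hΔ
    exact (abs_le_of_sq_le_sq' (by nlinarith) (by positivity)).2
  obtain ⟨u, hu⟩ : ∃ u, u = s / α := ⟨_, rfl⟩
  obtain ⟨y, hy⟩ : ∃ y, y = s / β := ⟨_, rfl⟩
  have hαu : α * u = s := by rw [hu]; field_simp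
  have hβy : β * y = s := by rw [hy]; field_simp
  have hu0 : 0 ≤ u := by rw [hu]; positivity
  have hy0 : 0 ≤ y := by rw [hy]; positivity
  have huβ : u < β := by rw [hu, div_lt_iff₀ hα]; linarith
  have hyα : y < α := by rw [hy, div_lt_iff₀ hβ]; linarith
  have huy : u * y = 1 - γ := by
    apply mul_left_cancel₀ hαβ.ne'
    rw [← hs2]
    linear_combination (β * y) * hαu + s * hβy
  have hx : 0 < 1 - u := by linarith
  have hy' : 0 < 1 - y := by linarith
  obtain ⟨p, hp⟩ : ∃ p, p = (β - u) / (1 - u) := ⟨_, rfl⟩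
  obtain ⟨r, hr⟩ : ∃ r, r = (α - y) / (1 - y) := ⟨_, rfl⟩
  have hpx : p * (1 - u) = β - u := by rw [hp]; field_simp
  have hry : r * (1 - y) = α - y := by rw [hr]; field_simp
  have hp0 : 0 ≤ p := by rw [hp]; exact div_nonneg (by linarith) hx.le
  have hr0 : 0 ≤ r := by rw [hr]; exact div_nonneg (by linarith) hy'.le
  have hpr : p + r ≤ 1 := by
    -- Clearing denominators turns the claim into `α + β - γ ≤ 2 * s`.
    have key : (1 - p - r) * ((1 - u) * (1 - y)) = 2 * s + γ - α - β := by
      linear_combination (-(1 - y)) * hpx - (1 - u) * hry + hαu + hβy - huy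
    have := nonneg_of_mul_nonneg_left (key ▸ (by linarith) :
      0 ≤ (1 - p - r) * ((1 - u) * (1 - y))) (mul_pos hx hy')
    linarith
  set W := weightingH7 u y p r hu0 (by linarith) hy0 (by linarith) hp0 hr0 hpr with hW
  have hin : InTri H7 W α β γ := by
    refine ⟨?_, ?_, ?_⟩
    · rw [edgeDensity_H7_BC]
      simp [hW, weightingH7]
      linear_combination hry
    · rw [edgeDensity_H7_AC]
      simp [hW, weightingH7]
      linear_combination hpx
    · rw [edgeDensity_H7_AB]
      simp [hW, weightingH7]
      linear_combination -huy
  have ht : triDensity H7 W.w = 2 * s + 2 * γ - 2 := by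
    rw [(triDensity_H7_of_inTri W hin).2]
    simp [hW, weightingH7]
    linear_combination hαu + hβy
  refine ⟨W, hin, ht, fun W' hW' => ?_⟩
  rw [ht]
  exact le_triDensity_H7 hα0 hβ0 W' hW'
end

section
/- For any (α,β,γ) ∈ R₂, T_min(α,β,γ) < min{αβ+γ−1, αγ+β−1, βγ+α−1}. -/
/-! Write `a = 1 - α`, `b = 1 - β`, `g = 1 - γ` for the non-edge densities.  On `R₂` all three are
positive, because `Δ(1, β, γ) = (β + γ - 1)² ≥ 0` and symmetrically in the other variables.

By inclusion-exclusion, the triangle density of a weighting of `H₇` is `α + β + γ - 2` plus the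
weight of the only triple of vertices containing two non-edges, namely `a₁b₂c₂`.  If `a₁` has
weight `u` and `b₂` has weight `v`, with `(1 - u)(1 - v) = g`, then the weights of the `cᵢ` are
determined by `α` and `β`, and that triple has weight `bv + au - uv = ab - (u - b)(v - a)`.  At
`u = b` this is `ab`, which gives the triangle density `αβ + γ - 1` exactly.  The condition
`αβ + γ > 1` says that `v > a` at `u = b`, so increasing `u` slightly beyond `b` keeps all weights
legal and makes the density strictly smaller.  Cyclically relabelling the classes gives the other
two bounds, and `Tmin` lies below all three densities so obtained. -/

open Finset

/-- Some weighted tripartite graph has edge densities `α, β, γ` and triangle density `t`. -/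
def Realizable (α β γ t : ℝ) : Prop :=
  ∃ (n : ℕ) (G : TriGraph n) (W : Weighting G), InTri G W α β γ ∧ triDensity G W.w = t

/-- The same graph with the roles of the three classes cyclically shifted. -/
def rotate {n : ℕ} (G : TriGraph n) : TriGraph n where
  cls := fun v => G.cls v - 1
  adj := G.adj
  symm := G.symm
  tripart := fun u v h e => G.tripart u v h (sub_left_injective e)

lemma classSet_rotate {n : ℕ} (G : TriGraph n) (i : Fin 3) :
    classSet (rotate G) i = classSet G (i + 1) := by
  ext v
  simp [classSet, rotate, sub_eq_iff_eq_add]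

lemma edgeDensity_rotate {n : ℕ} (G : TriGraph n) (w : Fin n → ℝ) (i j : Fin 3) :
    edgeDensity (rotate G) w i j = edgeDensity G w (i + 1) (j + 1) := by
  unfold edgeDensity
  rw [classSet_rotate, classSet_rotate]
  rfl

lemma triDensity_rotate {n : ℕ} (G : TriGraph n) (w : Fin n → ℝ) :
    triDensity (rotate G) w = triDensity G w := by
  unfold triDensity
  rw [classSet_rotate, classSet_rotate, classSet_rotate]
  change ∑ b ∈ classSet G 1, ∑ c ∈ classSet G 2, ∑ a ∈ classSet G 0,
    (if G.adj b c && G.adj b a && G.adj c a then w b * w c * w a else 0) = _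
  calc _ = ∑ b ∈ classSet G 1, ∑ a ∈ classSet G 0, ∑ c ∈ classSet G 2,
        (if G.adj b c && G.adj b a && G.adj c a then w b * w c * w a else 0) :=
        Finset.sum_congr rfl fun _ _ => Finset.sum_comm
    _ = _ := by
      rw [Finset.sum_comm]
      refine Finset.sum_congr rfl fun a _ => Finset.sum_congr rfl fun b _ =>
        Finset.sum_congr rfl fun c _ => ?_
      rw [G.symm b a, G.symm c a, show w b * w c * w a = w a * w b * w c by ring]
      congr 1
      cases G.adj b c <;> cases G.adj a b <;> cases G.adj a c <;> rfl

lemma Realizable.rotate {α β γ t : ℝ} (h : Realizable α β γ t) : Realizable β γ α t := by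
  obtain ⟨n, G, W, ⟨h1, h2, h3⟩, ht⟩ := h
  refine ⟨n, _root_.rotate G, ⟨W.w, W.nonneg, W.le_one, fun i => ?_⟩, ⟨?_, ?_, ?_⟩, ?_⟩
  · rw [classSet_rotate]
    exact W.sum_one _
  · rw [edgeDensity_rotate, edgeDensity_comm]
    exact h2
  · rw [edgeDensity_rotate, edgeDensity_comm]
    exact h3
  · rw [edgeDensity_rotate]
    exact h1
  · rw [triDensity_rotate]
    exact ht

lemma Realizable.nonneg {α β γ t : ℝ} (h : Realizable α β γ t) : 0 ≤ t := by
  obtain ⟨n, G, W, -, rfl⟩ := h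
  refine Finset.sum_nonneg fun a _ => Finset.sum_nonneg fun b _ => Finset.sum_nonneg fun c _ => ?_
  split_ifs
  · exact mul_nonneg (mul_nonneg (W.nonneg a) (W.nonneg b)) (W.nonneg c)
  · exact le_rfl

lemma Tmin_le_s14 {α β γ t : ℝ} (h : Realizable α β γ t) : Tmin α β γ ≤ t :=
  csInf_le ⟨0, fun _ hs => Realizable.nonneg hs⟩ h

/-- The densities of `H₇` when its vertices have weights
`a₁, a₂ = u, 1 - u`, `b₁, b₂ = 1 - v, v` and `c₁, c₂, c₃ = p, 1 - p - q, q`. -/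
lemma realizable_H7 {u v p q : ℝ} (hu : 0 ≤ u) (hu' : u ≤ 1) (hv : 0 ≤ v) (hv' : v ≤ 1)
    (hp : 0 ≤ p) (hq : 0 ≤ q) (hpq : p + q ≤ 1) :
    Realizable (1 - v * (1 - q)) (1 - u * (1 - p)) (1 - (1 - u) * (1 - v))
      (1 - v * (1 - q) - u * (1 - p) - (1 - u) * (1 - v) + u * v * (1 - p - q)) := by
  refine ⟨7, H7, ⟨![u, 1 - u, 1 - v, v, p, 1 - p - q, q], ?_, ?_, ?_⟩, ⟨?_, ?_, ?_⟩, ?_⟩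
  · intro i
    fin_cases i <;> simp <;> linarith
  · intro i
    fin_cases i <;> simp <;> linarith
  · intro i
    fin_cases i
    · change ∑ x ∈ classSet H7 0, _ = _
      simp [classSet_H7_zero]
    · change ∑ x ∈ classSet H7 1, _ = _
      simp [classSet_H7_one]
    · change ∑ x ∈ classSet H7 2, _ = _
      simp [classSet_H7_two]
  · simp only [edgeDensity, classSet_H7_one, classSet_H7_two]
    simp [H7, mkAdj]
    ring
  · simp only [edgeDensity, classSet_H7_zero, classSet_H7_two]
    simp [H7, mkAdj]
    ring
  · simp only [edgeDensity, classSet_H7_zero, classSet_H7_one]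
    simp [H7, mkAdj]
    ring
  · simp only [triDensity, classSet_H7_zero, classSet_H7_one, classSet_H7_two]
    simp [H7, mkAdj]
    ring

lemma exists_realizable_lt {α β γ : ℝ} (hα : 0 ≤ α) (hα' : α < 1) (hβ' : β < 1)
    (hγ' : γ < 1) (h : 1 < α * β + γ) : ∃ t < α * β + γ - 1, Realizable α β γ t := by
  have hβ0 : 0 < β := by
    by_contra! hβ
    nlinarith [mul_nonneg hα (neg_nonneg.2 hβ)]
  let v : ℝ → ℝ := fun u => 1 - (1 - γ) / (1 - u)
  have hv : ContinuousAt v (1 - β) := by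
    refine continuousAt_const.sub (continuousAt_const.div (by fun_prop) ?_)
    linarith
  have hv0 : 1 - α < v (1 - β) := by
    have : (1 - γ) / β < α := by rw [div_lt_iff₀ hβ0]; linarith
    simp only [v, sub_sub_cancel]
    linarith
  have e1 := hv.eventually (lt_mem_nhds hv0)
  -- The weight of `a₁b₂c₂` stays positive, so that `c₂` gets a nonnegative weight.
  have e2 : ∀ᶠ u in nhds (1 - β), 0 < (1 - β) * v u + (1 - α) * u - u * v u := by
    have hc : ContinuousAt (fun u => (1 - β) * v u + (1 - α) * u - u * v u) (1 - β) := by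
      fun_prop
    refine hc.eventually (lt_mem_nhds ?_)
    nlinarith
  have e3 : ∀ᶠ u in nhds (1 - β), u < 1 := gt_mem_nhds (by linarith)
  obtain ⟨u, ⟨⟨h1, h2⟩, h3⟩, h4⟩ :=
    ((((e1.and e2).and e3).filter_mono nhdsWithin_le_nhds).and
      (self_mem_nhdsWithin (s := Set.Ioi (1 - β)))).exists
  have h4 : 1 - β < u := h4
  have hu : 0 < u := by linarith
  have hvu : (1 - u) * (1 - v u) = 1 - γ := by
    have : 1 - u ≠ 0 := by linarith
    simp only [v]
    field_simp
    ring
  generalize v u = v at h1 h2 hvu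
  have hv0 : 0 < v := by linarith
  have hv1 : v ≤ 1 := by nlinarith
  have hp : (1 - β) / u ≤ 1 := by rw [div_le_one hu]; linarith
  have hq : (1 - α) / v ≤ 1 := by rw [div_le_one hv0]; linarith
  have hpq : 1 ≤ (1 - β) / u + (1 - α) / v := by
    rw [div_add_div _ _ hu.ne' hv0.ne', le_div_iff₀ (mul_pos hu hv0)]
    linarith
  have key := realizable_H7 (p := 1 - (1 - β) / u) (q := 1 - (1 - α) / v) hu.le h3.le hv0.le hv1
    (by linarith) (by linarith) (by linarith)
  have hA : v * (1 - (1 - (1 - α) / v)) = 1 - α := by field_simp; ring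
  have hB : u * (1 - (1 - (1 - β) / u)) = 1 - β := by field_simp; ring
  have hC : u * v * (1 - (1 - (1 - β) / u) - (1 - (1 - α) / v))
      = (1 - β) * v + (1 - α) * u - u * v := by field_simp; ring
  rw [hA, hB, hC, hvu] at key
  simp only [sub_sub_cancel] at key
  exact ⟨_, by nlinarith [mul_pos (sub_pos.2 h4) (sub_pos.2 h1)], key⟩

/-- For (α,β,γ) ∈ R₂,
T_min(α,β,γ) < min{αβ+γ−1, αγ+β−1, βγ+α−1}. -/
theorem stmt14 (α β γ : ℝ) (h : inR2 α β γ) :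
    Tmin α β γ < min (min (α * β + γ - 1) (α * γ + β - 1)) (β * γ + α - 1) := by
  obtain ⟨⟨⟨⟨hα, hα'⟩, ⟨hβ, hβ'⟩, ⟨hγ, hγ'⟩⟩, h1, h2, h3⟩, hΔ⟩ := h
  unfold Delta at hΔ
  have hα1 : α < 1 := by
    refine lt_of_le_of_ne hα' ?_
    rintro rfl
    nlinarith [sq_nonneg (β + γ - 1)]
  have hβ1 : β < 1 := by
    refine lt_of_le_of_ne hβ' ?_
    rintro rfl
    nlinarith [sq_nonneg (α + γ - 1)]
  have hγ1 : γ < 1 := by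
    refine lt_of_le_of_ne hγ' ?_
    rintro rfl
    nlinarith [sq_nonneg (α + β - 1)]
  obtain ⟨t, ht, hR⟩ := exists_realizable_lt hα hα1 hβ1 hγ1 h1
  obtain ⟨t', ht', hR'⟩ := exists_realizable_lt hγ hγ1 hα1 hβ1 (by linarith)
  obtain ⟨t'', ht'', hR''⟩ := exists_realizable_lt hβ hβ1 hγ1 hα1 h3
  refine lt_min (lt_min ?_ ?_) ?_
  · exact (Tmin_le_s14 hR).trans_lt ht
  · exact (Tmin_le_s14 hR'.rotate).trans_lt (by linarith)
  · exact (Tmin_le_s14 hR''.rotate.rotate).trans_lt ht''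
end
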